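/- arXiv:1609.02068 — 5 statements merged into one kernel-verified Lean document; each statement's English description precedes it below -/
import Mathlib

section
/- Let d ≥ 2. There is a constant C, depending only on d, with the following property. Let ρ > 0, let Ψ be a C² function on the closure of the cube C_ρ^{(d−1)} = (−2ρ,2ρ)^{d−1} with values in (−2ρ,2ρ), and fix l ∈ {1,…,d}. Then ∫_{C_ρ^{(d−1)}} m(ξ°) dξ° ≤ C · ρ^{d−2} · (1 + ρ·‖∇²Ψ‖_{L^∞}), where the integral is over Lebesgue measure on the (d−1)-dimensional cube; in particular m(ξ°) < ∞ (and hence X_l(ξ°) is finite) for Lebesgue-almost every ξ°. -/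
open MeasureTheory Set
open scoped Classical

/-- The open cube `(−2ρ, 2ρ)^n`. -/
def cube (n : ℕ) (ρ : ℝ) : Set (Fin n → ℝ) :=
  Set.univ.pi fun _ => Set.Ioo (-(2 * ρ)) (2 * ρ)

/-- The graph surface `S = {ξ ∈ (−2ρ,2ρ)^{n+1} : ξ_d = Ψ(ξ̂)}` of `Ψ`. -/
def graphSurface (n : ℕ) (ρ : ℝ) (Ψ : (Fin n → ℝ) → ℝ) : Set (Fin (n + 1) → ℝ) :=
  {ξ | (∀ i, ξ i ∈ Set.Ioo (-(2 * ρ)) (2 * ρ)) ∧ ξ (Fin.last n) = Ψ (Fin.init ξ)}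

/-- `X_l(ξ°) = {t ∈ (−2ρ,2ρ) : the point with `t` inserted as `l`-th coordinate of `ξ°`
lies on the surface `S`}`. -/
def Xset (n : ℕ) (ρ : ℝ) (Ψ : (Fin n → ℝ) → ℝ) (l : Fin (n + 1)) (ξ : Fin n → ℝ) :
    Set ℝ :=
  {t | t ∈ Set.Ioo (-(2 * ρ)) (2 * ρ) ∧ l.insertNth t ξ ∈ graphSurface n ρ Ψ}

/-- The function `m(ξ°)`: `(4ρ)⁻¹` if `X` is empty or a singleton, `Σ_j ρ_j⁻¹` with
`ρ_j = dist(ξ^{(j)}, X∖{ξ^{(j)}})` if `X` is finite with at least two points, and `+∞`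
if `X` is infinite. -/
noncomputable def mval (ρ : ℝ) (X : Set ℝ) : ENNReal :=
  if X.Subsingleton then (ENNReal.ofReal (4 * ρ))⁻¹
  else if X.Finite then
    ∑' x : X, (ENNReal.ofReal (Metric.infDist (x : ℝ) (X \ {(x : ℝ)})))⁻¹
  else ⊤

/-- One-dimensional area formula (upper bound form). -/
lemma oneD_area (a b : ℝ) (f f' : ℝ → ℝ)
    (hf : ∀ t ∈ Icc a b, HasDerivWithinAt f (f' t) (Icc a b) t)
    (hf'c : ContinuousOn f' (Icc a b)) :
    ∃ G : ℝ → ENNReal, Measurable G ∧ (∫⁻ s, G s) ≤ ENNReal.ofReal (b - a) ∧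
      ∀ s, (∀ t ∈ Icc a b, f t = s → f' t ≠ 0) →
        ∑' x : {t | t ∈ Ioo a b ∧ f t = s}, (ENNReal.ofReal |f' x|)⁻¹ ≤ G s := by
  have hfc : ContinuousOn f (Icc a b) := fun t ht => (hf t ht).continuousWithinAt
  have hfd : ∀ t ∈ Ioo a b, HasDerivAt f (f' t) t := fun t ht =>
    (hf t (Ioo_subset_Icc_self ht)).hasDerivAt (Icc_mem_nhds ht.1 ht.2)
  set U : Set ℝ := {t | t ∈ Ioo a b ∧ f' t ≠ 0} with hU
  have hUo : IsOpen U := by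
    have := (hf'c.mono Ioo_subset_Icc_self).isOpen_inter_preimage isOpen_Ioo
      (isOpen_compl_singleton (x := (0:ℝ)))
    exact this
  let e := (Denumerable.eqv (ℚ × ℚ)).symm
  let J : ℕ → Set ℝ := fun i =>
    if Ioo ((e i).1 : ℝ) ((e i).2 : ℝ) ⊆ U then Ioo ((e i).1 : ℝ) ((e i).2 : ℝ) else ∅
  have hJm : ∀ i, MeasurableSet (J i) := by
    intro i; simp only [J]; split_ifs
    · exact measurableSet_Ioo
    · exact MeasurableSet.empty
  have hJU : ∀ i, J i ⊆ U := by
    intro i; simp only [J]; split_ifs with h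
    · exact h
    · exact empty_subset _
  have hJinj : ∀ i, InjOn f (J i) := by
    intro i; simp only [J]; split_ifs with h
    · have key : ∀ x ∈ Ioo ((e i).1 : ℝ) ((e i).2 : ℝ), ∀ y ∈ Ioo ((e i).1 : ℝ) ((e i).2 : ℝ),
          x < y → f x ≠ f y := by
        intro x hx y hy hxy hfxy
        have hxU := h hx
        have hyU := h hy
        have hsub : Icc x y ⊆ Ioo a b := Icc_subset_Ioo hxU.1.1 hyU.1.2
        obtain ⟨c, hc, hc0⟩ := exists_hasDerivAt_eq_zero hxy
          (hfc.mono (hsub.trans Ioo_subset_Icc_self)) hfxy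
          (fun z hz => hfd z (hsub (Ioo_subset_Icc_self hz)))
        exact (h (⟨hx.1.trans hc.1, hc.2.trans hy.2⟩ : c ∈ Ioo _ _)).2 hc0
      intro x hx y hy hxy
      rcases lt_trichotomy x y with h1 | h1 | h1
      · exact absurd hxy (key x hx y hy h1)
      · exact h1
      · exact absurd hxy.symm (key y hy x hx h1)
    · exact injOn_empty _
  have hJcov : ∀ t ∈ U, ∃ i, t ∈ J i := by
    intro t ht
    obtain ⟨l, u, ⟨hl, hu⟩, hlu⟩ := mem_nhds_iff_exists_Ioo_subset.1 (hUo.mem_nhds ht)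
    obtain ⟨p, hp1, hp2⟩ := exists_rat_btwn hl
    obtain ⟨q, hq1, hq2⟩ := exists_rat_btwn hu
    refine ⟨Denumerable.eqv (ℚ × ℚ) (p, q), ?_⟩
    have : Ioo (p:ℝ) (q:ℝ) ⊆ U := (Ioo_subset_Ioo hp1.le hq2.le).trans hlu
    simp only [J, e, Equiv.symm_apply_apply, this, if_true]
    exact ⟨hp2, hq1⟩
  let A : ℕ → Set ℝ := disjointed J
  have hAm : ∀ i, MeasurableSet (A i) := MeasurableSet.disjointed hJm
  have hAJ : ∀ i, A i ⊆ J i := fun i => disjointed_subset J i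
  have hAU : ∀ i, A i ⊆ U := fun i => (hAJ i).trans (hJU i)
  have hAI : ∀ i, A i ⊆ Icc a b := fun i x hx => Ioo_subset_Icc_self (hAU i hx).1
  have hAinj : ∀ i, InjOn f (A i) := fun i => (hJinj i).mono (hAJ i)
  have hAcov : ∀ t ∈ U, ∃ i, t ∈ A i := by
    intro t ht
    have : t ∈ ⋃ i, A i := by
      rw [iUnion_disjointed]; exact mem_iUnion.2 (hJcov t ht)
    exact mem_iUnion.1 this
  have hemb : ∀ i, MeasurableEmbedding ((A i).domRestrict f) := fun i =>
    ContinuousOn.measurableEmbedding (hAm i) (hfc.mono (hAI i)) (hAinj i)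
  let g : ℕ → ℝ → ENNReal := fun i =>
    Function.extend ((A i).domRestrict f) (fun x => (ENNReal.ofReal |f' x|)⁻¹) (fun _ => 0)
  have hgm : ∀ i, Measurable (g i) := by
    intro i
    refine (hemb i).measurable_extend ?_ measurable_const
    have : Continuous (fun x : A i => f' x) := (hf'c.mono (hAI i)).domRestrict
    exact (ENNReal.measurable_ofReal.comp (this.abs.measurable)).inv
  have hgval : ∀ i, ∀ x ∈ A i, g i (f x) = (ENNReal.ofReal |f' x|)⁻¹ := by
    intro i x hx
    exact (hemb i).injective.extend_apply _ _ (⟨x, hx⟩ : A i)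
  have hgint : ∀ i, ∫⁻ s, g i s = volume (A i) := by
    intro i
    have hsupp : Function.support (g i) ⊆ f '' (A i) := by
      intro s hs
      by_contra hcon
      apply hs
      apply Function.extend_apply'
      rintro ⟨x, hx⟩
      exact hcon ⟨x, x.2, hx⟩
    rw [← setLIntegral_eq_of_support_subset hsupp,
      lintegral_image_eq_lintegral_abs_deriv_mul (hAm i)
        (fun x hx => ((hf x (hAI i hx)).mono (hAI i))) (hAinj i)]
    rw [setLIntegral_congr_fun (g := fun _ => 1) (hAm i)]
    · simp
    · intro x hx
      simp only
      rw [hgval i x hx]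
      apply ENNReal.mul_inv_cancel
      · simpa using (hAU i hx).2
      · exact ENNReal.ofReal_ne_top
  refine ⟨fun s => ∑' i, g i s, Measurable.tsum hgm, ?_, ?_⟩
  · rw [lintegral_tsum (fun i => (hgm i).aemeasurable)]
    simp only [hgint]
    rw [← measure_iUnion (disjoint_disjointed J) hAm]
    calc volume (⋃ i, A i) ≤ volume (Icc a b) := measure_mono (iUnion_subset hAI)
      _ = _ := Real.volume_Icc
  · intro s hs
    have hx : ∀ x : {t | t ∈ Ioo a b ∧ f t = s}, ∃ i, (x:ℝ) ∈ A i := fun x =>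
      hAcov x ⟨x.2.1, hs x (Ioo_subset_Icc_self x.2.1) x.2.2⟩
    choose ι hι using hx
    have hinj : Function.Injective ι := by
      intro x y hxy
      apply Subtype.ext
      refine hAinj (ι x) (hι x) (hxy ▸ hι y) ?_
      rw [x.2.2, y.2.2]
    calc ∑' x : {t | t ∈ Ioo a b ∧ f t = s}, (ENNReal.ofReal |f' x|)⁻¹
        = ∑' x : {t | t ∈ Ioo a b ∧ f t = s}, g (ι x) s := by
          refine tsum_congr fun x => ?_
          rw [← hgval (ι x) x (hι x), x.2.2]
      _ ≤ _ := ENNReal.tsum_comp_le_tsum_of_injective hinj (fun i => g i s)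

lemma oneD_crit_null (a b : ℝ) (f f' : ℝ → ℝ)
    (hf : ∀ t ∈ Icc a b, HasDerivWithinAt f (f' t) (Icc a b) t) :
    volume (f '' {t | t ∈ Icc a b ∧ f' t = 0}) = 0 := by
  refine addHaar_image_eq_zero_of_det_fderivWithin_eq_zero (f' := fun _ => 0) volume ?_ ?_
  · rintro x ⟨hx, hx0⟩
    have hsub : {t | t ∈ Icc a b ∧ f' t = 0} ⊆ Icc a b := fun y hy => hy.1
    have := (hf x hx).mono hsub
    rw [hx0] at this
    have h2 := this.hasFDerivWithinAt
    have h3 : (ContinuousLinearMap.toSpanSingleton ℝ (0:ℝ)) = 0 := by ext; simp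
    rw [h3] at h2
    exact h2
  · intro x _
    rw [ContinuousLinearMap.det]
    simp

lemma oneD_finite (a b : ℝ) (f f' : ℝ → ℝ)
    (hf : ∀ t ∈ Icc a b, HasDerivWithinAt f (f' t) (Icc a b) t)
    (s : ℝ) (hs : ∀ t ∈ Icc a b, f t = s → f' t ≠ 0) :
    {t | t ∈ Ioo a b ∧ f t = s}.Finite := by
  by_contra hinf
  have hfc : ContinuousOn f (Icc a b) := fun t ht => (hf t ht).continuousWithinAt
  have hcl : IsClosed {t | t ∈ Icc a b ∧ f t = s} :=
    hfc.preimage_isClosed_of_isClosed isClosed_Icc (isClosed_singleton (x := s))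
  have hcomp : IsCompact {t | t ∈ Icc a b ∧ f t = s} :=
    isCompact_Icc.of_isClosed_subset hcl (fun x hx => hx.1)
  obtain ⟨x, hx, hacc⟩ := Set.Infinite.exists_accPt_of_subset_isCompact hinf hcomp
    (fun x hx => ⟨Ioo_subset_Icc_self hx.1, hx.2⟩)
  have hne := (hf x hx.1).eventually_ne (c := s) (hs x hx.1 hx.2)
  rw [accPt_iff_frequently] at hacc
  rw [eventually_nhdsWithin_iff] at hne
  apply hacc
  filter_upwards [hne] with y hy hy2
  exact hy ⟨Ioo_subset_Icc_self hy2.2.1, hy2.1⟩ hy2.2.2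

lemma mval_lt_top (ρ : ℝ) (hρ : 0 < ρ) (X : Set ℝ) (hX : X.Finite) : mval ρ X < ⊤ := by
  unfold mval
  split_ifs with h
  · simp [hρ]
  · have := hX.fintype
    rw [tsum_fintype]
    refine ENNReal.sum_lt_top.2 ?_
    rintro ⟨x, hx⟩ -
    have hne : (X \ {x}).Nonempty := by
      by_contra hcon
      rw [Set.not_nonempty_iff_eq_empty, Set.sdiff_eq_empty] at hcon
      exact h (subsingleton_singleton.anti hcon)
    have hcl : IsClosed (X \ {x}) := (hX.subset sdiff_subset).isClosed
    have hpos := (hcl.notMem_iff_infDist_pos hne (x := x)).1 (by simp)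
    simpa using hpos

lemma oneD_pointwise (ρ : ℝ) (hρ : 0 < ρ) (a b M : ℝ) (f f' : ℝ → ℝ)
    (hf : ∀ t ∈ Icc a b, HasDerivWithinAt f (f' t) (Icc a b) t)
    (hL : ∀ t ∈ Icc a b, ∀ u ∈ Icc a b, |f' t - f' u| ≤ M * |t - u|)
    (s : ℝ) (hs : ∀ t ∈ Icc a b, f t = s → f' t ≠ 0) :
    mval ρ {t | t ∈ Ioo a b ∧ f t = s} ≤ (ENNReal.ofReal (4 * ρ))⁻¹ +
      ENNReal.ofReal M * ∑' x : {t | t ∈ Ioo a b ∧ f t = s}, (ENNReal.ofReal |f' x|)⁻¹ := by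
  have hfin := oneD_finite a b f f' hf s hs
  have hfc : ContinuousOn f (Icc a b) := fun t ht => (hf t ht).continuousWithinAt
  have hfd : ∀ t ∈ Ioo a b, HasDerivAt f (f' t) t := fun t ht =>
    (hf t (Ioo_subset_Icc_self ht)).hasDerivAt (Icc_mem_nhds ht.1 ht.2)
  set X := {t | t ∈ Ioo a b ∧ f t = s} with hX
  have key : ∀ x ∈ X, ∀ y ∈ X, x < y → |f' x| ≤ M * |x - y| ∧ |f' y| ≤ M * |x - y| := by
    intro x hx y hy hxy
    have hsub : Icc x y ⊆ Ioo a b := Icc_subset_Ioo hx.1.1 hy.1.2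
    obtain ⟨c, hc, hc0⟩ := exists_hasDerivAt_eq_zero hxy
      (hfc.mono (hsub.trans Ioo_subset_Icc_self)) (hx.2.trans hy.2.symm)
      (fun z hz => hfd z (hsub (Ioo_subset_Icc_self hz)))
    have hcI : c ∈ Icc a b := Ioo_subset_Icc_self (hsub (Ioo_subset_Icc_self hc))
    have h1 := hL x (Ioo_subset_Icc_self hx.1) c hcI
    have h2 := hL y (Ioo_subset_Icc_self hy.1) c hcI
    rw [hc0, sub_zero] at h1 h2
    have p1 : |x - c| = c - x := by rw [abs_sub_comm, abs_of_pos (by linarith [hc.1])]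
    have p2 : |y - c| = y - c := by rw [abs_of_pos (by linarith [hc.2])]
    have p3 : |x - y| = y - x := by rw [abs_sub_comm, abs_of_pos (by linarith)]
    rw [p1] at h1; rw [p2] at h2; rw [p3]
    have hM : 0 ≤ M := by
      by_contra hM
      push Not at hM
      nlinarith [abs_nonneg (f' x), hc.1]
    constructor
    · nlinarith [hc.2]
    · nlinarith [hc.1]
  unfold mval
  split_ifs with hsub
  · exact le_self_add
  · refine le_trans ?_ le_add_self
    rw [← ENNReal.tsum_mul_left]
    refine ENNReal.tsum_le_tsum fun x => ?_
    obtain ⟨x, hx⟩ := x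
    simp only
    have hF : 0 < |f' x| := abs_pos.2 (hs x (Ioo_subset_Icc_self hx.1) hx.2)
    have hne : (X \ {x}).Nonempty := by
      by_contra hcon
      rw [Set.not_nonempty_iff_eq_empty, Set.sdiff_eq_empty] at hcon
      exact hsub (subsingleton_singleton.anti hcon)
    have hall : ∀ y ∈ X \ {x}, |f' x| ≤ M * dist x y := by
      rintro y ⟨hy, hyx⟩
      rw [Real.dist_eq]
      rcases lt_or_gt_of_ne (show x ≠ y from fun h => hyx h.symm) with h | h
      · exact (key x hx y hy h).1
      · rw [abs_sub_comm]; exact (key y hy x hx h).2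
    have hM : 0 < M := by
      obtain ⟨y, hy⟩ := hne
      have := hall y hy
      by_contra hM
      push Not at hM
      nlinarith [dist_nonneg (x := x) (y := y)]
    have hD : |f' x| / M ≤ Metric.infDist x (X \ {x}) := by
      rw [Metric.le_infDist hne]
      intro y hy
      rw [div_le_iff₀' hM]
      exact hall y hy
    calc (ENNReal.ofReal (Metric.infDist x (X \ {x})))⁻¹
        ≤ (ENNReal.ofReal (|f' x| / M))⁻¹ := ENNReal.inv_le_inv.2 (ENNReal.ofReal_le_ofReal hD)
      _ = _ := by
        rw [← ENNReal.ofReal_inv_of_pos (by positivity), ← ENNReal.ofReal_inv_of_pos hF,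
          ← ENNReal.ofReal_mul hM.le]
        congr 1
        field_simp

lemma oneD_bound (ρ : ℝ) (hρ : 0 < ρ) (M : ℝ) (f f' : ℝ → ℝ)
    (hf : ∀ t ∈ Icc (-(2*ρ)) (2*ρ), HasDerivWithinAt f (f' t) (Icc (-(2*ρ)) (2*ρ)) t)
    (hL : ∀ t ∈ Icc (-(2*ρ)) (2*ρ), ∀ u ∈ Icc (-(2*ρ)) (2*ρ), |f' t - f' u| ≤ M * |t - u|) :
    ∫⁻ s in Ioo (-(2*ρ)) (2*ρ), mval ρ {t | t ∈ Ioo (-(2*ρ)) (2*ρ) ∧ f t = s}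
      ≤ 1 + ENNReal.ofReal M * ENNReal.ofReal (4 * ρ) := by
  have hf'c : ContinuousOn f' (Icc (-(2*ρ)) (2*ρ)) := by
    apply LipschitzOnWith.continuousOn (K := M.toNNReal)
    apply LipschitzOnWith.of_dist_le_mul
    intro x hx y hy
    rw [Real.dist_eq, Real.dist_eq]
    exact (hL x hx y hy).trans (by gcongr; exact Real.le_coe_toNNReal M)
  obtain ⟨G, hGm, hGi, hG⟩ := oneD_area _ _ f f' hf hf'c
  have hnull := oneD_crit_null _ _ f f' hf
  have h4 : 2 * ρ - -(2 * ρ) = 4 * ρ := by ring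
  rw [h4] at hGi
  have hae : ∀ᵐ s ∂(volume.restrict (Ioo (-(2*ρ)) (2*ρ))),
      mval ρ {t | t ∈ Ioo (-(2*ρ)) (2*ρ) ∧ f t = s} ≤
        (ENNReal.ofReal (4 * ρ))⁻¹ + ENNReal.ofReal M * G s := by
    apply ae_restrict_of_ae
    filter_upwards [measure_eq_zero_iff_ae_notMem.1 hnull] with s hs
    have hs' : ∀ t ∈ Icc (-(2*ρ)) (2*ρ), f t = s → f' t ≠ 0 :=
      fun t ht hts h0 => hs ⟨t, ⟨ht, h0⟩, hts⟩
    refine (oneD_pointwise ρ hρ _ _ M f f' hf hL s hs').trans ?_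
    gcongr
    exact hG s hs'
  refine (lintegral_mono_ae hae).trans ?_
  rw [lintegral_add_left measurable_const]
  gcongr
  · rw [setLIntegral_const, Real.volume_Ioo, h4, ENNReal.inv_mul_cancel]
    · simpa using hρ
    · exact ENNReal.ofReal_ne_top
  · rw [lintegral_const_mul _ hGm]
    gcongr
    exact (setLIntegral_le_lintegral _ _).trans hGi

lemma cube_snoc (m : ℕ) (ρ : ℝ) (η : Fin m → ℝ) (s : ℝ) :
    (Fin.snoc η s : Fin (m + 1) → ℝ) ∈ cube (m + 1) ρ ↔
      η ∈ cube m ρ ∧ s ∈ Ioo (-(2 * ρ)) (2 * ρ) := by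
  simp only [cube, mem_univ_pi]
  constructor
  · intro h
    exact ⟨fun i => by simpa using h i.castSucc, by simpa using h (Fin.last m)⟩
  · rintro ⟨h1, h2⟩ i
    refine Fin.lastCases ?_ (fun j => ?_) i
    · simpa using h2
    · simpa using h1 j

lemma cube_meas (m : ℕ) (ρ : ℝ) : MeasurableSet (cube m ρ) :=
  MeasurableSet.univ_pi fun _ => measurableSet_Ioo

lemma cube_vol (m : ℕ) (ρ : ℝ) : volume (cube m ρ) = ENNReal.ofReal (4 * ρ) ^ m := by
  rw [cube, Real.volume_pi_Ioo]
  simp only [Finset.prod_const, Finset.card_univ, Fintype.card_fin]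
  congr 2
  ring

lemma slice_bound (m : ℕ) (ρ : ℝ) (G : (Fin (m + 1) → ℝ) → ENNReal) (K : ENNReal)
    (hG : ∀ η ∈ cube m ρ, ∫⁻ s in Ioo (-(2 * ρ)) (2 * ρ), G (Fin.snoc η s) ≤ K) :
    ∫⁻ ξ in cube (m + 1) ρ, G ξ ≤ K * ENNReal.ofReal (4 * ρ) ^ m := by
  obtain ⟨g, hgm, hgG, hgi⟩ :=
    exists_measurable_le_lintegral_eq (volume.restrict (cube (m + 1) ρ)) G
  rw [hgi, ← lintegral_indicator (cube_meas _ _)]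
  have hm : Measurable ((cube (m + 1) ρ).indicator g) := hgm.indicator (cube_meas _ _)
  have hmp := (volume_preserving_piFinSuccAbove (fun _ : Fin (m + 1) => ℝ) (Fin.last m)).symm
  rw [← hmp.lintegral_comp hm]
  have hmc : Measurable (fun a => (cube (m + 1) ρ).indicator g
      ((MeasurableEquiv.piFinSuccAbove (fun _ : Fin (m + 1) => ℝ) (Fin.last m)).symm a)) :=
    hm.comp hmp.measurable
  rw [Measure.volume_eq_prod, lintegral_prod_symm _ hmc.aemeasurable]
  have hsn : ∀ (s : ℝ) (η : Fin m → ℝ),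
      (MeasurableEquiv.piFinSuccAbove (fun _ : Fin (m + 1) => ℝ) (Fin.last m)).symm (s, η)
        = Fin.snoc η s := by
    intro s η
    exact Fin.insertNth_last' s η
  simp only [hsn]
  rw [← cube_vol m ρ, ← setLIntegral_const, ← lintegral_indicator (cube_meas _ _)]
  refine lintegral_mono fun η => ?_
  by_cases hη : η ∈ cube m ρ
  · rw [indicator_of_mem hη]
    refine le_trans ?_ (hG η hη)
    rw [← lintegral_indicator measurableSet_Ioo]
    refine lintegral_mono fun s => ?_
    by_cases hs : s ∈ Ioo (-(2 * ρ)) (2 * ρ)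
    · rw [indicator_of_mem hs, indicator_of_mem ((cube_snoc m ρ η s).2 ⟨hη, hs⟩)]
      exact hgG _
    · rw [indicator_of_notMem (fun h => hs ((cube_snoc m ρ η s).1 h).2)]
      exact zero_le
  · rw [indicator_of_notMem hη]
    have : ∀ s : ℝ, (cube (m + 1) ρ).indicator g (Fin.snoc η s) = 0 := fun s =>
      indicator_of_notMem (fun h => hη ((cube_snoc m ρ η s).1 h).1) _
    simp [this]

lemma closure_cube (m : ℕ) (ρ : ℝ) (hρ : 0 < ρ) :
    closure (cube m ρ) = Set.univ.pi fun _ => Icc (-(2 * ρ)) (2 * ρ) := by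
  rw [cube, closure_pi_set]
  congr 1
  ext1 i
  exact closure_Ioo (by linarith)

lemma insertNth_snoc' (m : ℕ) (k : Fin (m + 1)) (t s : ℝ) (η : Fin m → ℝ) :
    (k.castSucc.insertNth t (Fin.snoc η s : Fin (m + 1) → ℝ) : Fin (m + 2) → ℝ) =
      Fin.snoc (k.insertNth t η : Fin (m + 1) → ℝ) s := by
  rw [Fin.insertNth_eq_iff]
  constructor
  · simp
  · ext i
    refine Fin.lastCases ?_ (fun j => ?_) i
    · simp [Fin.removeNth]
    · simp [Fin.removeNth]

lemma Xset_castSucc (m : ℕ) (ρ : ℝ) (Ψ : (Fin (m + 1) → ℝ) → ℝ) (k : Fin (m + 1))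
    (η : Fin m → ℝ) (s : ℝ) (hη : η ∈ cube m ρ) (hs : s ∈ Ioo (-(2 * ρ)) (2 * ρ)) :
    Xset (m + 1) ρ Ψ k.castSucc (Fin.snoc η s) =
      {t | t ∈ Ioo (-(2 * ρ)) (2 * ρ) ∧ Ψ (k.insertNth t η) = s} := by
  ext t
  simp only [Xset, graphSurface, mem_ofPred_eq, insertNth_snoc', Fin.snoc_last, Fin.init_snoc]
  constructor
  · rintro ⟨h1, h2, h3⟩
    exact ⟨h1, h3.symm⟩
  · rintro ⟨h1, h2⟩
    refine ⟨h1, fun i => ?_, h2.symm⟩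
    refine Fin.lastCases ?_ (fun j => ?_) i
    · simpa using hs
    · rw [Fin.snoc_castSucc]
      refine Fin.succAboveCases k ?_ (fun j' => ?_) j
      · simpa using h1
      · simpa using (mem_univ_pi.1 hη) j'

lemma main_castSucc (m : ℕ) (ρ : ℝ) (hρ : 0 < ρ) (Ψ : (Fin (m + 1) → ℝ) → ℝ)
    (hΨ : ContDiffOn ℝ 2 Ψ (closure (cube (m + 1) ρ))) (M : ℝ)
    (hM : ∀ x ∈ closure (cube (m + 1) ρ),
        ‖iteratedFDerivWithin ℝ 2 Ψ (closure (cube (m + 1) ρ)) x‖ ≤ M)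
    (k : Fin (m + 1)) :
    (∫⁻ ξ in cube (m + 1) ρ, mval ρ (Xset (m + 1) ρ Ψ k.castSucc ξ))
        ≤ (1 + ENNReal.ofReal M * ENNReal.ofReal (4 * ρ)) * ENNReal.ofReal (4 * ρ) ^ m ∧
    (∀ᵐ ξ ∂(volume.restrict (cube (m + 1) ρ)),
      mval ρ (Xset (m + 1) ρ Ψ k.castSucc ξ) < ⊤) := by
  set Q := closure (cube (m + 1) ρ) with hQ
  have hQe : Q = Set.univ.pi fun _ => Icc (-(2 * ρ)) (2 * ρ) := closure_cube _ ρ hρ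
  have hconv : Convex ℝ Q := by
    rw [hQe]; exact convex_pi fun _ _ => convex_Icc _ _
  have hint : (interior Q).Nonempty := by
    refine ⟨0, ?_⟩
    refine interior_maximal subset_closure (isOpen_set_pi finite_univ fun _ _ => isOpen_Ioo) ?_
    rw [mem_univ_pi]; intro i; simp [hρ]
  have hcomp : IsCompact Q := by
    rw [hQe]; exact isCompact_univ_pi fun _ => isCompact_Icc
  have hud : UniqueDiffOn ℝ Q := uniqueDiffOn_convex hconv hint
  let D := fderivWithin ℝ Ψ Q
  have hDd : ContDiffOn ℝ 1 D Q := hΨ.fderivWithin hud (by norm_num)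
  have hDc : ContinuousOn D Q := hDd.continuousOn
  have hDL : ∀ x ∈ Q, ∀ y ∈ Q, ‖D y - D x‖ ≤ M * ‖y - x‖ := by
    intro x hx y hy
    refine hconv.norm_image_sub_le_of_norm_fderivWithin_le (hDd.differentiableOn (by norm_num))
      ?_ hx hy
    intro z hz
    have h1 := norm_iteratedFDerivWithin_fderivWithin (f := Ψ) (n := 1) hud hz
    rw [norm_iteratedFDerivWithin_one _ (hud z hz)] at h1
    rw [h1]
    exact hM z hz
  let v : Fin (m + 1) → ℝ := Pi.single k 1
  have hv : ‖v‖ = 1 := by simp [v, Pi.norm_single]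
  have hpQ : ∀ η ∈ cube m ρ, ∀ t ∈ Icc (-(2 * ρ)) (2 * ρ), (k.insertNth t η : Fin (m + 1) → ℝ) ∈ Q := by
    intro η hη t ht
    rw [hQe, mem_univ_pi]
    intro j
    refine Fin.succAboveCases k ?_ (fun j' => ?_) j
    · simpa using ht
    · simpa using Ioo_subset_Icc_self ((mem_univ_pi.1 hη) j')
  have hpd : ∀ (η : Fin m → ℝ) (t u : ℝ),
      (k.insertNth t η : Fin (m + 1) → ℝ) - k.insertNth u η = (t - u) • v := by
    intro η t u
    ext j
    refine Fin.succAboveCases k ?_ (fun j' => ?_) j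
    · simp [v]
    · simp [v]
  have hder : ∀ η ∈ cube m ρ, ∀ t ∈ Icc (-(2 * ρ)) (2 * ρ),
      HasDerivWithinAt (fun t => Ψ (k.insertNth t η)) (D (k.insertNth t η) v)
        (Icc (-(2 * ρ)) (2 * ρ)) t := by
    intro η hη t ht
    have h1 : HasFDerivWithinAt Ψ (D (k.insertNth t η)) Q (k.insertNth t η) :=
      ((hΨ.differentiableOn (by norm_num)) _ (hpQ η hη t ht)).hasFDerivWithinAt
    have h2 : HasDerivWithinAt (fun t => (k.insertNth t η : Fin (m + 1) → ℝ)) v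
        (Icc (-(2 * ρ)) (2 * ρ)) t := by
      have h3 : (fun t => (k.insertNth t η : Fin (m + 1) → ℝ)) =
          fun t => k.insertNth 0 η + t • v := by
        ext1 u
        have := hpd η u 0
        rw [sub_zero] at this
        rw [← this]; abel
      rw [h3]
      have := (((hasDerivAt_id t).smul_const v).const_add
        (k.insertNth 0 η : Fin (m + 1) → ℝ)).hasDerivWithinAt (s := Icc (-(2 * ρ)) (2 * ρ))
      simpa using this
    exact h1.comp_hasDerivWithinAt t h2 (fun u hu => hpQ η hη u hu)
  have hLip : ∀ η ∈ cube m ρ, ∀ t ∈ Icc (-(2 * ρ)) (2 * ρ), ∀ u ∈ Icc (-(2 * ρ)) (2 * ρ),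
      |D (k.insertNth t η) v - D (k.insertNth u η) v| ≤ M * |t - u| := by
    intro η hη t ht u hu
    have h1 := hDL _ (hpQ η hη u hu) _ (hpQ η hη t ht)
    rw [hpd, norm_smul, hv, mul_one, Real.norm_eq_abs] at h1
    rw [← sub_apply, ← Real.norm_eq_abs]
    refine (ContinuousLinearMap.le_opNorm _ _).trans ?_
    rw [hv, mul_one]
    exact h1
  constructor
  · apply slice_bound
    intro η hη
    refine le_trans (le_of_eq ?_) (oneD_bound ρ hρ M _ _ (hder η hη) (hLip η hη))
    refine setLIntegral_congr_fun measurableSet_Ioo fun s hs => ?_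
    rw [Xset_castSucc m ρ Ψ k η s hη hs]
  · let φ : (Fin (m + 1) → ℝ) → (Fin (m + 1) → ℝ) := fun x => Fin.snoc (k.removeNth x) (Ψ x)
    let crit : Set (Fin (m + 1) → ℝ) := {x | x ∈ Q ∧ D x v = 0}
    have hcritc : IsCompact crit := by
      refine hcomp.of_isClosed_subset ?_ (fun x hx => hx.1)
      have : ContinuousOn (fun x => D x v) Q := hDc.clm_apply continuousOn_const
      exact this.preimage_isClosed_of_isClosed isClosed_closure (isClosed_singleton (x := (0:ℝ)))
    have hφ : ContinuousOn φ crit := by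
      rw [continuousOn_pi]
      intro i
      refine Fin.lastCases ?_ (fun j => ?_) i
      · simp only [φ, Fin.snoc_last]
        exact hΨ.continuousOn.mono (fun x hx => hx.1)
      · simp only [φ, Fin.snoc_castSucc, Fin.removeNth]
        exact (continuous_apply _).continuousOn
    have hBm : MeasurableSet (φ '' crit) := (hcritc.image_of_continuousOn hφ).measurableSet
    have hB0 : volume.restrict (cube (m + 1) ρ) (φ '' crit) = 0 := by
      rw [← lintegral_indicator_one hBm, ← nonpos_iff_eq_zero]
      refine (slice_bound m ρ _ 0 ?_).trans (by simp)
      intro η hη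
      rw [nonpos_iff_eq_zero]
      have hnull := oneD_crit_null _ _ _ _ (hder η hη)
      rw [← lintegral_zero (μ := volume.restrict (Ioo (-(2 * ρ)) (2 * ρ)))]
      apply lintegral_congr_ae
      filter_upwards [ae_restrict_of_ae (measure_eq_zero_iff_ae_notMem.1 hnull)] with s hs
      apply indicator_of_notMem
      rintro ⟨x, ⟨hxQ, hx0⟩, hx⟩
      obtain ⟨hx1, hx2⟩ := Fin.snoc_injective2 hx
      have hxe : (k.insertNth (x k) η : Fin (m + 1) → ℝ) = x := by
        rw [← hx1]; exact Fin.insertNth_self_removeNth k x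
      apply hs
      rw [hQe, mem_univ_pi] at hxQ
      refine ⟨x k, ⟨hxQ k, ?_⟩, ?_⟩
      · rw [hxe]; exact hx0
      · simp only [hxe]; exact hx2
    filter_upwards [measure_eq_zero_iff_ae_notMem.1 hB0, ae_restrict_mem (cube_meas _ _)]
      with ξ hξ hξc
    apply mval_lt_top ρ hρ
    rw [← Fin.snoc_init_self ξ] at hξ hξc ⊢
    obtain ⟨hη, hs⟩ := (cube_snoc m ρ _ _).1 hξc
    rw [Xset_castSucc m ρ Ψ k _ _ hη hs]
    refine oneD_finite _ _ _ _ (hder _ hη) _ ?_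
    intro t ht hts h0
    apply hξ
    refine ⟨k.insertNth t (Fin.init ξ), ⟨hpQ _ hη t ht, h0⟩, ?_⟩
    simp only [φ, Fin.removeNth_insertNth]
    rw [← hts]

/-- For `d = n + 1 ≥ 2` there is a constant `C = C(d)` such that, for every `ρ > 0`,
every `C²` function `Ψ` on the closure of the cube `(−2ρ,2ρ)^{d−1}` with values in
`(−2ρ,2ρ)` and `‖∇²Ψ‖_{L^∞} ≤ M`, and every `l`,
`∫_{(−2ρ,2ρ)^{d−1}} m(ξ°) dξ° ≤ C ρ^{d−2} (1 + ρ M)`; in particular `m(ξ°) < ∞` (hence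
`X_l(ξ°)` is finite) for a.e. `ξ°`. -/
theorem mval_integral_bound (n : ℕ) (hn : 1 ≤ n) :
    ∃ C : ℝ, ∀ ρ : ℝ, 0 < ρ → ∀ Ψ : (Fin n → ℝ) → ℝ,
      ContDiffOn ℝ 2 Ψ (closure (cube n ρ)) →
      (∀ x ∈ closure (cube n ρ), Ψ x ∈ Set.Ioo (-(2 * ρ)) (2 * ρ)) →
      ∀ M : ℝ,
      (∀ x ∈ closure (cube n ρ),
        ‖iteratedFDerivWithin ℝ 2 Ψ (closure (cube n ρ)) x‖ ≤ M) →
      ∀ l : Fin (n + 1),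
        (∫⁻ ξ in cube n ρ, mval ρ (Xset n ρ Ψ l ξ))
            ≤ ENNReal.ofReal (C * ρ ^ (n - 1) * (1 + ρ * M)) ∧
        (∀ᵐ ξ ∂(volume.restrict (cube n ρ)), mval ρ (Xset n ρ Ψ l ξ) < ⊤) := by
  obtain ⟨m, rfl⟩ : ∃ m, n = m + 1 := ⟨n - 1, by omega⟩
  refine ⟨4 ^ (m + 1), ?_⟩
  intro ρ hρ Ψ hΨ _ M hM l
  have hM0 : 0 ≤ M := by
    have h0 : (0 : Fin (m + 1) → ℝ) ∈ closure (cube (m + 1) ρ) := by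
      apply subset_closure
      rw [cube, mem_univ_pi]; intro i; simp [hρ]
    exact (norm_nonneg _).trans (hM 0 h0)
  have hfin : (1 + ENNReal.ofReal M * ENNReal.ofReal (4 * ρ)) * ENNReal.ofReal (4 * ρ) ^ m ≤
      ENNReal.ofReal (4 ^ (m + 1) * ρ ^ (m + 1 - 1) * (1 + ρ * M)) := by
    rw [← ENNReal.ofReal_mul hM0, ← ENNReal.ofReal_pow (by positivity), ← ENNReal.ofReal_one,
      ← ENNReal.ofReal_add (by norm_num) (by positivity), ← ENNReal.ofReal_mul (by positivity)]
    apply ENNReal.ofReal_le_ofReal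
    rw [Nat.add_sub_cancel, mul_pow, pow_succ]
    have : 0 ≤ (4:ℝ) ^ m * ρ ^ m := by positivity
    nlinarith [mul_nonneg hρ.le hM0]
  refine Fin.lastCases ?_ (fun k => ?_) l
  · have hsub : ∀ ξ, mval ρ (Xset (m + 1) ρ Ψ (Fin.last (m + 1)) ξ) =
        (ENNReal.ofReal (4 * ρ))⁻¹ := by
      intro ξ
      rw [mval, if_pos]
      intro t ht u hu
      have h1 := ht.2.2
      have h2 := hu.2.2
      simp only [Fin.insertNth_last', Fin.snoc_last, Fin.init_snoc] at h1 h2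
      rw [h1, h2]
    simp only [hsub]
    have h4 : ENNReal.ofReal (4 * ρ) ≠ 0 := by simpa using hρ
    refine ⟨?_, ?_⟩
    · refine le_trans ?_ hfin
      rw [setLIntegral_const, cube_vol, pow_succ', ← mul_assoc,
        ENNReal.inv_mul_cancel h4 ENNReal.ofReal_ne_top]
      gcongr
      exact le_self_add
    · exact Filter.Eventually.of_forall fun _ => by simpa using hρ
  · obtain ⟨h1, h2⟩ := main_castSucc m ρ hρ Ψ hΨ M hM k
    exact ⟨h1.trans hfin, h2⟩
end

section
/- Let d ≥ 2. There is a constant C, depending only on d, with the following property. Let ρ > 0, let Ψ be a C² function on the closure of the cube C_ρ^{(d−1)} = (−2ρ,2ρ)^{d−1} with values in (−2ρ,2ρ), and fix l ∈ {1,…,d}. Define ρ₀(ξ°) = min_j ρ_j(ξ°) if X_l(ξ°) is nonempty and finite, ρ₀(ξ°) = 0 if X_l(ξ°) is infinite, and ρ₀(ξ°) = 4ρ if X_l(ξ°) = ∅, and for ε ∈ (0, 4ρ) set M_ε = {ξ° ∈ C_ρ^{(d−1)} : ρ₀(ξ°) < ε}. Then the Lebesgue measure of M_ε satisfies |M_ε|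 ≤ C · ε · ρ^{d−2} · (1 + ρ·‖∇²Ψ‖_{L^∞}). -/
open MeasureTheory Set
open scoped Classical

/-- `ρ₀(ξ°) = min_j ρ_j(ξ°)` (with `ρ_j = dist(ξ^{(j)}, X∖{ξ^{(j)}})`) if `X` is
nonempty and finite with at least two points, `4ρ` if `X` is empty or a singleton,
and `0` if `X` is infinite. -/
noncomputable def rho0 (ρ : ℝ) (X : Set ℝ) : ℝ :=
  if X.Subsingleton then 4 * ρ
  else if X.Finite then sInf ((fun x => Metric.infDist x (X \ {x})) '' X)
  else 0

lemma aux_close {ρ ε : ℝ} (hε : 0 < ε) (hερ : ε < 4 * ρ) {X : Set ℝ}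
    (hX : X ⊆ Set.Icc (-(2 * ρ)) (2 * ρ)) (h : rho0 ρ X < ε) :
    ∃ a ∈ X, ∃ b ∈ X, a < b ∧ b - a < ε := by
  suffices H : ∃ a ∈ X, ∃ b ∈ X, a ≠ b ∧ dist a b < ε by
    obtain ⟨a, ha, b, hb, hab, hd⟩ := H
    rw [Real.dist_eq] at hd
    have := abs_lt.1 hd
    rcases lt_or_gt_of_ne hab with h1 | h1
    · exact ⟨a, ha, b, hb, h1, by linarith⟩
    · exact ⟨b, hb, a, ha, h1, by linarith⟩
  unfold rho0 at h
  split_ifs at h with h1 h2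
  · linarith
  · rw [Set.not_subsingleton_iff] at h1
    obtain ⟨x, hx⟩ := h1.nonempty
    obtain ⟨v, ⟨a, ha, rfl⟩, hv⟩ := exists_lt_of_csInf_lt (Set.Nonempty.image _ ⟨x, hx⟩) h
    obtain ⟨b, hb, hba⟩ := h1.exists_ne a
    obtain ⟨c, hc, hcd⟩ := (Metric.infDist_lt_iff (s := X \ {a}) ⟨b, hb, hba⟩).1 hv
    exact ⟨a, ha, c, hc.1, fun h => hc.2 h.symm, hcd⟩
  · obtain ⟨x, -, hx⟩ := Set.Infinite.exists_accPt_of_subset_isCompact h2 isCompact_Icc hX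
    rw [accPt_iff_nhds] at hx
    obtain ⟨a, ⟨ha, haX⟩, hax⟩ := hx _ (Metric.ball_mem_nhds x (half_pos hε))
    obtain ⟨b, ⟨hb, hbX⟩, hbx⟩ := hx _ (Metric.ball_mem_nhds x (dist_pos.2 hax))
    rw [Metric.mem_ball] at ha hb
    refine ⟨a, haX, b, hbX, ?_, ?_⟩
    · rintro rfl
      exact lt_irrefl _ hb
    · have := dist_triangle_right a b x
      linarith

lemma aux_det {n : ℕ} (k : Fin n) (L : (Fin n → ℝ) →L[ℝ] ℝ) :
    (ContinuousLinearMap.pi (fun i => if i = k then L else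
      ContinuousLinearMap.proj (R := ℝ) (φ := fun _ : Fin n => ℝ) i)).det = L (Pi.single k 1) := by
  set A := (ContinuousLinearMap.pi (fun i => if i = k then L else
      ContinuousLinearMap.proj (R := ℝ) (φ := fun _ : Fin n => ℝ) i)) with hA
  have h : LinearMap.toMatrix' (A : (Fin n → ℝ) →ₗ[ℝ] (Fin n → ℝ)) =
      (1 : Matrix (Fin n) (Fin n) ℝ).updateRow k (fun j => L (Pi.single j 1)) := by
    ext i j
    rw [LinearMap.toMatrix'_apply, Matrix.updateRow_apply]
    have : (fun j' => if j' = j then (1:ℝ) else 0) = Pi.single j 1 := by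
      ext j'; simp [Pi.single_apply]
    by_cases hi : i = k
    · simp [hA, hi]
    · simp [hA, hi, Matrix.one_apply, Pi.single_apply]
  unfold ContinuousLinearMap.det
  rw [← LinearMap.det_toMatrix', h, ← Matrix.cramer_transpose_apply]
  simp

lemma aux_closure (n : ℕ) {ρ : ℝ} (hρ : 0 < ρ) :
    closure (cube n ρ) = Set.univ.pi fun _ => Set.Icc (-(2 * ρ)) (2 * ρ) := by
  unfold cube
  rw [closure_pi_set]
  congr 1
  ext1 i
  exact closure_Ioo (by linarith)

lemma aux_image {n : ℕ} {ρ : ℝ} (hρ : 0 < ρ) {Ψ : (Fin n → ℝ) → ℝ} (k : Fin n) {δ : ℝ}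
    (hδ : 0 ≤ δ)
    (hΨ : ContDiffOn ℝ 2 Ψ (closure (cube n ρ)))
    (hu : UniqueDiffOn ℝ (closure (cube n ρ))) :
    volume ((fun x => Function.update x k (Ψ x)) '' {x ∈ closure (cube n ρ) |
      |fderivWithin ℝ Ψ (closure (cube n ρ)) x (Pi.single k 1)| ≤ δ}) ≤
      ENNReal.ofReal (δ * (4 * ρ) ^ n) := by
  set Q := closure (cube n ρ) with hQ
  set K := {x ∈ Q | |fderivWithin ℝ Ψ Q x (Pi.single k 1)| ≤ δ} with hK
  have hQc : IsClosed Q := isClosed_closure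
  have hc : ContinuousOn (fun x => |fderivWithin ℝ Ψ Q x (Pi.single k 1)|) Q :=
    ((hΨ.continuousOn_fderivWithin hu (by norm_num)).clm_apply continuousOn_const).abs
  have hKm : MeasurableSet K :=
    (hc.preimage_isClosed_of_isClosed hQc isClosed_Iic : IsClosed (Q ∩ _ ⁻¹' Set.Iic δ)).measurableSet
  have hKQ : K ⊆ Q := fun x hx => hx.1
  have hd : ∀ x ∈ K, HasFDerivWithinAt (fun x => Function.update x k (Ψ x))
      (ContinuousLinearMap.pi (fun i => if i = k then fderivWithin ℝ Ψ Q x else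
      ContinuousLinearMap.proj (R := ℝ) (φ := fun _ : Fin n => ℝ) i)) K x := by
    intro x hx
    rw [hasFDerivWithinAt_pi']
    intro i
    by_cases hi : i = k
    · subst hi
      have := ((hΨ.differentiableOn (by norm_num) x hx.1).hasFDerivWithinAt).mono hKQ
      convert this using 1
      · ext y; simp
      · ext y; simp
    · have := (ContinuousLinearMap.proj (R := ℝ) (φ := fun _ : Fin n => ℝ) i).hasFDerivWithinAt
        (s := K) (x := x)
      have e1 : (fun x : Fin n → ℝ => Function.update x k (Ψ x) i) = fun x => x i := by
        ext y; simp [hi]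
      have e2 : (ContinuousLinearMap.proj (R := ℝ) (φ := fun _ : Fin n => ℝ) i).comp
          (ContinuousLinearMap.pi (fun i => if i = k then fderivWithin ℝ Ψ Q x else
            ContinuousLinearMap.proj (R := ℝ) (φ := fun _ : Fin n => ℝ) i)) =
          ContinuousLinearMap.proj (R := ℝ) (φ := fun _ : Fin n => ℝ) i := by
        ext y; simp [hi]
      rw [e1, e2]
      exact this
  refine (addHaar_image_le_lintegral_abs_det_fderiv volume hKm hd).trans ?_
  calc _ ≤ ∫⁻ x in K, ENNReal.ofReal δ := by
        refine setLIntegral_mono measurable_const ?_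
        intro x hx
        rw [aux_det]
        exact ENNReal.ofReal_le_ofReal hx.2
    _ = ENNReal.ofReal δ * volume K := by simp
    _ ≤ ENNReal.ofReal δ * volume Q := by gcongr
    _ = _ := by
        rw [hQ, aux_closure n hρ, Set.pi_univ_Icc, Real.volume_Icc_pi, ENNReal.ofReal_mul hδ,
          ENNReal.ofReal_pow (by linarith)]
        simp only [Finset.prod_const, Finset.card_univ, Fintype.card_fin]
        congr 3
        ring

lemma aux_small {n : ℕ} {ρ : ℝ} (hρ : 0 < ρ) {Ψ : (Fin n → ℝ) → ℝ} (k : Fin n) {M : ℝ}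
    (hΨ : ContDiffOn ℝ 2 Ψ (closure (cube n ρ)))
    (hu : UniqueDiffOn ℝ (closure (cube n ρ)))
    (hM : ∀ x ∈ closure (cube n ρ),
        ‖iteratedFDerivWithin ℝ 2 Ψ (closure (cube n ρ)) x‖ ≤ M)
    {ε a b : ℝ} (hab : a < b) (hε : b - a < ε) {x : Fin n → ℝ}
    (hxa : Function.update x k a ∈ closure (cube n ρ))
    (hxb : Function.update x k b ∈ closure (cube n ρ))
    (h : Ψ (Function.update x k a) = Ψ (Function.update x k b)) :
    |fderivWithin ℝ Ψ (closure (cube n ρ)) (Function.update x k a) (Pi.single k 1)| ≤ M * ε := by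
  have hconv : Convex ℝ (closure (cube n ρ)) := by
    rw [aux_closure n hρ]
    exact convex_pi fun i _ => convex_Icc _ _
  have hmem : ∀ t ∈ Set.Icc a b, Function.update x k t ∈ closure (cube n ρ) := by
    intro t ht
    rw [aux_closure n hρ] at hxa hxb ⊢
    intro i _
    have h1 := hxa i trivial
    have h2 := hxb i trivial
    by_cases hi : i = k
    · subst hi
      simp only [Function.update_self] at h1 h2 ⊢
      exact ⟨h1.1.trans ht.1, ht.2.trans h2.2⟩
    · simpa [hi] using h1
  set Q := closure (cube n ρ) with hQ
  have hder : ∀ t ∈ Set.Ioo a b, HasDerivAt (Ψ ∘ Function.update x k)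
      (fderivWithin ℝ Ψ Q (Function.update x k t) (Pi.single k 1)) t := by
    intro t ht
    refine HasFDerivWithinAt.comp_hasDerivAt t (t := Q)
      (hΨ.differentiableOn (by norm_num) _ (hmem t ⟨ht.1.le, ht.2.le⟩)).hasFDerivWithinAt
      (hasDerivAt_update x k t) ?_
    filter_upwards [Icc_mem_nhds ht.1 ht.2] with s hs using hmem s hs
  have hcont : ContinuousOn (Ψ ∘ Function.update x k) (Set.Icc a b) :=
    hΨ.continuousOn.comp (by fun_prop) hmem
  obtain ⟨c, hc, hc0⟩ := exists_hasDerivAt_eq_zero hab hcont h hder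
  have hL := Convex.norm_image_sub_le_of_norm_fderivWithin_le (𝕜 := ℝ) (C := M)
    (f := fderivWithin ℝ Ψ Q) (s := Q)
    ((hΨ.fderivWithin (m := 1) hu (by norm_num)).differentiableOn (by norm_num))
    (fun y hy => by
      rw [← norm_iteratedFDerivWithin_one _ (hu y hy),
        norm_iteratedFDerivWithin_fderivWithin hu hy]
      exact hM y hy) hconv (hmem c ⟨hc.1.le, hc.2.le⟩) hxa
  have hM0 : 0 ≤ M := (norm_nonneg _).trans (hM _ hxa)
  have hsub : Function.update x k a - Function.update x k c = Pi.single k (a - c) := by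
    ext i
    by_cases hi : i = k
    · subst hi; simp
    · simp [hi]
  rw [hsub, Pi.norm_single, Real.norm_eq_abs, abs_of_neg (by linarith [hc.1])] at hL
  have h3 := (fderivWithin ℝ Ψ Q (Function.update x k a) -
    fderivWithin ℝ Ψ Q (Function.update x k c)).le_opNorm (Pi.single k 1)
  rw [Pi.norm_single, norm_one, mul_one, sub_apply, hc0, sub_zero, Real.norm_eq_abs] at h3
  refine h3.trans (hL.trans ?_)
  gcongr
  linarith [hc.2]

lemma aux_perm {n : ℕ} (k : Fin n) : ∃ σ : Equiv.Perm (Fin n), ∀ (Ψ : (Fin n → ℝ) → ℝ)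
    (ξ : Fin n → ℝ) (t : ℝ),
    (k.castSucc.insertNth t ξ : Fin (n + 1) → ℝ) (Fin.last n) =
      Ψ (Fin.init (k.castSucc.insertNth t ξ : Fin (n + 1) → ℝ)) →
    ∀ j, Function.update (Fin.init (k.castSucc.insertNth t ξ : Fin (n + 1) → ℝ)) k
      (Ψ (Fin.init (k.castSucc.insertNth t ξ : Fin (n + 1) → ℝ))) (σ j) = ξ j := by
  let s : Fin n → Fin n := fun j => if h : k.castSucc.succAbove j = Fin.last n then k else
    (k.castSucc.succAbove j).castPred h
  have hsk : ∀ j, k.castSucc.succAbove j ≠ Fin.last n → s j ≠ k := by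
    intro j h h2
    simp only [s, h, dite_false] at h2
    apply Fin.succAbove_ne k.castSucc j
    have h3 := congrArg Fin.castSucc h2
    rwa [Fin.castSucc_castPred] at h3
  have hinj : Function.Injective s := by
    intro i j hij
    by_cases hi : k.castSucc.succAbove i = Fin.last n <;>
    by_cases hj : k.castSucc.succAbove j = Fin.last n
    · exact Fin.succAbove_right_injective (hi.trans hj.symm)
    · exact absurd (hij.symm.trans (by simp [s, hi])) (hsk j hj)
    · exact absurd (hij.trans (by simp [s, hj])) (hsk i hi)
    · simp only [s, hi, hj, dite_false] at hij
      exact Fin.succAbove_right_injective (Fin.castPred_inj.1 hij)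
  refine ⟨Equiv.ofBijective s (Finite.injective_iff_bijective.1 hinj), ?_⟩
  intro Ψ ξ t h j
  rw [Equiv.ofBijective_apply]
  by_cases hj : k.castSucc.succAbove j = Fin.last n
  · have : s j = k := by simp [s, hj]
    rw [this, Function.update_self, ← h, ← hj, Fin.insertNth_apply_succAbove]
  · rw [Function.update_of_ne (hsk j hj)]
    simp only [s, hj, dite_false, Fin.init, Fin.castSucc_castPred, Fin.insertNth_apply_succAbove]

lemma aux_init {n : ℕ} (k : Fin n) (ξ : Fin n → ℝ) (s t : ℝ) :
    (Fin.init (k.castSucc.insertNth t ξ : Fin (n + 1) → ℝ) : Fin n → ℝ) =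
      Function.update (Fin.init (k.castSucc.insertNth s ξ : Fin (n + 1) → ℝ)) k t := by
  ext i
  by_cases hi : i = k
  · subst hi; simp [Fin.init]
  · rw [Function.update_of_ne hi]
    have : i.castSucc ≠ k.castSucc := fun h => hi (Fin.castSucc_injective _ h)
    obtain ⟨j, hj⟩ := Fin.exists_succAbove_eq this
    simp only [Fin.init, ← hj, Fin.insertNth_apply_succAbove]

/-- For `d = n + 1 ≥ 2` there is a constant `C = C(d)` such that, for every `ρ > 0`,
every `C²` function `Ψ` on the closure of the cube `(−2ρ,2ρ)^{d−1}` with values in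
`(−2ρ,2ρ)` and `‖∇²Ψ‖_{L^∞} ≤ M`, every `l`, and every `ε ∈ (0,4ρ)`, the set
`M_ε = {ξ° : ρ₀(ξ°) < ε}` satisfies `|M_ε| ≤ C ε ρ^{d−2} (1 + ρ M)`. -/
theorem measure_Meps_bound (n : ℕ) (hn : 1 ≤ n) :
    ∃ C : ℝ, ∀ ρ : ℝ, 0 < ρ → ∀ Ψ : (Fin n → ℝ) → ℝ,
      ContDiffOn ℝ 2 Ψ (closure (cube n ρ)) →
      (∀ x ∈ closure (cube n ρ), Ψ x ∈ Set.Ioo (-(2 * ρ)) (2 * ρ)) →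
      ∀ M : ℝ,
      (∀ x ∈ closure (cube n ρ),
        ‖iteratedFDerivWithin ℝ 2 Ψ (closure (cube n ρ)) x‖ ≤ M) →
      ∀ l : Fin (n + 1), ∀ ε : ℝ, 0 < ε → ε < 4 * ρ →
        volume {ξ ∈ cube n ρ | rho0 ρ (Xset n ρ Ψ l ξ) < ε}
          ≤ ENNReal.ofReal (C * ε * ρ ^ (n - 1) * (1 + ρ * M)) := by
  refine ⟨4 ^ n, ?_⟩
  intro ρ hρ Ψ hΨ _ M hM l ε hε hερ
  have hu : UniqueDiffOn ℝ (closure (cube n ρ)) := by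
    rw [aux_closure n hρ]
    exact UniqueDiffOn.univ_pi fun _ => uniqueDiffOn_Icc (by linarith)
  have hM0 : 0 ≤ M := by
    refine (norm_nonneg _).trans (hM 0 ?_)
    rw [aux_closure n hρ]
    intro i _
    simp only [Pi.zero_apply, Set.mem_Icc]
    constructor <;> linarith
  have hXsub : ∀ ξ, Xset n ρ Ψ l ξ ⊆ Set.Icc (-(2 * ρ)) (2 * ρ) :=
    fun ξ t ht => ⟨ht.1.1.le, ht.1.2.le⟩
  induction l using Fin.lastCases with
  | last =>
    have : {ξ ∈ cube n ρ | rho0 ρ (Xset n ρ Ψ (Fin.last n) ξ) < ε} = ∅ := by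
      rw [Set.eq_empty_iff_forall_notMem]
      rintro ξ ⟨-, h⟩
      obtain ⟨a, ha, b, hb, hab, -⟩ := aux_close hε hερ (hXsub ξ) h
      have h1 := ha.2.2
      have h2 := hb.2.2
      simp only [Fin.insertNth_last', Fin.snoc_last, Fin.init_snoc] at h1 h2
      linarith
    rw [this]; simp
  | cast k =>
    obtain ⟨σ, hσ⟩ := aux_perm k
    have hsub : {ξ ∈ cube n ρ | rho0 ρ (Xset n ρ Ψ k.castSucc ξ) < ε} ⊆
        (MeasurableEquiv.piCongrLeft (fun _ : Fin n => ℝ) σ) ⁻¹'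
        ((fun x => Function.update x k (Ψ x)) '' {x ∈ closure (cube n ρ) |
          |fderivWithin ℝ Ψ (closure (cube n ρ)) x (Pi.single k 1)| ≤ M * ε}) := by
      rintro ξ ⟨-, h⟩
      obtain ⟨a, ha, b, hb, hab, hlt⟩ := aux_close hε hερ (hXsub ξ) h
      have hin : ∀ t ∈ Xset n ρ Ψ k.castSucc ξ,
          (Fin.init (k.castSucc.insertNth t ξ : Fin (n + 1) → ℝ) : Fin n → ℝ) ∈
            closure (cube n ρ) := fun t ht => subset_closure fun i _ => ht.2.1 i.castSucc
      have hxa := hin a ha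
      have hxb := hin b hb
      refine ⟨Fin.init (k.castSucc.insertNth a ξ : Fin (n + 1) → ℝ), ⟨hxa, ?_⟩, ?_⟩
      · have e1 := aux_init k ξ a a
        have e2 := aux_init k ξ a b
        have hval : Ψ (Fin.init (k.castSucc.insertNth a ξ : Fin (n + 1) → ℝ)) =
            Ψ (Fin.init (k.castSucc.insertNth b ξ : Fin (n + 1) → ℝ)) := by
          rw [← ha.2.2, ← hb.2.2]
          obtain ⟨j, hj⟩ := Fin.exists_succAbove_eq (Fin.castSucc_lt_last k).ne'
          rw [← hj, Fin.insertNth_apply_succAbove, Fin.insertNth_apply_succAbove]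
        have := aux_small hρ k hΨ hu hM hab hlt (e1 ▸ hxa) (e2 ▸ hxb) (by rw [← e1, ← e2, hval])
        rwa [← e1] at this
      · have := hσ Ψ ξ a ha.2.2
        ext i
        obtain ⟨j, rfl⟩ := σ.surjective i
        rw [MeasurableEquiv.coe_piCongrLeft, Equiv.piCongrLeft_apply_apply]
        exact this j
    refine (measure_mono hsub).trans ?_
    rw [(volume_measurePreserving_piCongrLeft (fun _ : Fin n => ℝ) σ).measure_preimage_equiv]
    refine (aux_image hρ k (by positivity) hΨ hu).trans (ENNReal.ofReal_le_ofReal ?_)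
    obtain ⟨m, rfl⟩ : ∃ m, n = m + 1 := ⟨n - 1, by omega⟩
    have : 0 ≤ (4:ℝ) ^ (m + 1) * ε * ρ ^ m := by positivity
    rw [Nat.add_sub_cancel, mul_pow, pow_succ ρ]
    nlinarith
end

section
/- Let d ≥ 2, ρ > 0, let Ψ be a C² function on the closure of the cube C_ρ^{(d−1)} = (−2ρ,2ρ)^{d−1} with values in (−2ρ,2ρ), and fix l ∈ {1,…,d−1}. Then for every continuous function u : [−2ρ,2ρ]^d → [0,∞), ∫_{C_ρ^{(d−1)}} ( Σ_{t ∈ X_l(ξ°)} u(ξ° with t inserted as l-th coordinate) ) dξ° = ∫_{C_ρ^{(d−1)}} u(ξ̂, Ψ(ξ̂)) · |∂_{ξ_l} Ψ(ξ̂)| dξ̂, where both sides are interpreted in [0,∞] (the inner sum being +∞ if X_l(ξ°) is infinite and the series diverges). -/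
open MeasureTheory Set

theorem area_formula_aux {n : ℕ} (F : (Fin n → ℝ) → (Fin n → ℝ))
    (F' : (Fin n → ℝ) → (Fin n → ℝ) →L[ℝ] (Fin n → ℝ)) (Ω : Set (Fin n → ℝ))
    (hΩ : MeasurableSet Ω) (hF : ∀ x ∈ Ω, HasFDerivWithinAt F (F' x) Ω x)
    (h0 : MeasurableSet {x | x ∈ Ω ∧ (F' x).det = 0})
    (g : (Fin n → ℝ) → ENNReal) (hg : Measurable g) :
    ∫⁻ y, ∑' x : {x | x ∈ Ω ∧ F x = y}, g x
      = ∫⁻ x in Ω, g x * ENNReal.ofReal |(F' x).det| := by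
  set Z := {x | x ∈ Ω ∧ (F' x).det = 0} with hZ
  have hZΩ : Z ⊆ Ω := fun x hx => hx.1
  set s := Ω \ Z with hs
  have hsΩ : s ⊆ Ω := sdiff_subset
  have hsm : MeasurableSet s := hΩ.diff h0
  have hdet : ∀ x ∈ s, (F' x).det ≠ 0 := fun x hx h => hx.2 ⟨hx.1, h⟩
  have key : ∀ A : (Fin n → ℝ) →L[ℝ] (Fin n → ℝ), ∃ r : NNReal, r ≠ 0 ∧
      (A.det ≠ 0 → ∀ t : Set (Fin n → ℝ), ApproximatesLinearOn F A t r → InjOn F t) := by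
    intro A
    by_cases hA : A.det = 0
    · exact ⟨1, one_ne_zero, fun h => absurd hA h⟩
    let B := A.toContinuousLinearEquivOfDetNeZero hA
    have hB : (B : (Fin n → ℝ) →L[ℝ] (Fin n → ℝ)) = A :=
      A.coe_toContinuousLinearEquivOfDetNeZero hA
    rcases B.subsingleton_or_nnnorm_symm_pos with h | h
    · exact ⟨1, one_ne_zero, fun _ t _ => fun x _ y _ _ => Subsingleton.elim x y⟩
    · refine ⟨‖(B.symm : (Fin n → ℝ) →L[ℝ] (Fin n → ℝ))‖₊⁻¹ / 2, by
        have := h.ne'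
        positivity, fun _ t ht => ?_⟩
      rw [← hB] at ht
      exact ht.injOn (Or.inr (NNReal.half_lt_self (inv_ne_zero h.ne')))
  choose r hr0 hr using key
  obtain ⟨t, A, tdisj, tm, scov, tapp, tA⟩ :=
    exists_partition_approximatesLinearOn_of_hasFDerivWithinAt F s F'
      (fun x hx => (hF x (hsΩ hx)).mono hsΩ) r hr0
  have hinj : ∀ i, InjOn F (s ∩ t i) := by
    intro i
    rcases s.eq_empty_or_nonempty with he | hne
    · simp [he]
    · obtain ⟨y, hy, hAy⟩ := tA hne i
      exact hr _ (by rw [hAy]; exact hdet y hy) _ (tapp i)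
  have hmeas : ∀ i, MeasurableSet (s ∩ t i) := fun i => hsm.inter (tm i)
  have hder : ∀ i, ∀ x ∈ s ∩ t i, HasFDerivWithinAt F (F' x) (s ∩ t i) x := fun i x hx =>
    (hF x (hsΩ hx.1)).mono (inter_subset_left.trans hsΩ)
  have hdisj : Pairwise (Function.onFun Disjoint (fun i => s ∩ t i)) := fun i j hij =>
    (tdisj hij).mono inter_subset_right inter_subset_right
  have hsU : s = ⋃ i, s ∩ t i := by
    rw [← inter_iUnion]; exact (inter_eq_left.2 scov).symm
  let G : ℕ → (Fin n → ℝ) → ENNReal := fun i y => ∑' x : {x | x ∈ s ∩ t i ∧ F x = y}, g x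
  have hGF : ∀ i, ∀ x ∈ s ∩ t i, G i (F x) = g x := by
    intro i x hx
    have : {z | z ∈ s ∩ t i ∧ F z = F x} = {x} := by
      ext z
      simp only [mem_ofPred_eq, mem_singleton_iff]
      constructor
      · rintro ⟨h1, h2⟩; exact hinj i h1 hx h2
      · rintro rfl; exact ⟨hx, rfl⟩
    simp only [G]
    rw [this, tsum_singleton x g]
  have hG0 : ∀ i y, y ∉ F '' (s ∩ t i) → G i y = 0 := by
    intro i y hy
    have : IsEmpty {x | x ∈ s ∩ t i ∧ F x = y} := ⟨fun z => hy ⟨z, z.2⟩⟩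
    simp only [G]
    exact tsum_empty
  have hemb := fun i => measurableEmbedding_of_fderivWithin (hmeas i) (hder i) (hinj i)
  have hGm : ∀ i, Measurable (G i) := by
    intro i
    have : G i = Function.extend ((s ∩ t i).domRestrict F) (fun x => g x) (fun _ => 0) := by
      funext y
      by_cases hy : y ∈ F '' (s ∩ t i)
      · obtain ⟨x, hx, rfl⟩ := hy
        rw [hGF i x hx]
        exact ((hemb i).injective.extend_apply (fun x => g x) (fun _ => 0) ⟨x, hx⟩).symm
      · rw [hG0 i y hy, Function.extend_apply']
        rintro ⟨x, rfl⟩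
        exact hy ⟨x, x.2, rfl⟩
    rw [this]
    exact (hemb i).measurable_extend (hg.comp measurable_subtype_coe) measurable_const
  have hnull : volume (F '' Z) = 0 :=
    addHaar_image_eq_zero_of_det_fderivWithin_eq_zero volume
      (fun x hx => (hF x hx.1).mono hZΩ) (fun x hx => hx.2)
  have hae : ∀ᵐ y, ∑' x : {x | x ∈ Ω ∧ F x = y}, g x = ∑' i, G i y := by
    have : ∀ᵐ y, y ∉ F '' Z := measure_eq_zero_iff_ae_notMem.1 hnull
    filter_upwards [this] with y hy
    have : {x | x ∈ Ω ∧ F x = y} = ⋃ i, {x | x ∈ s ∩ t i ∧ F x = y} := by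
      ext x
      simp only [mem_ofPred_eq, mem_iUnion, exists_and_right]
      constructor
      · rintro ⟨h1, h2⟩
        refine ⟨?_, h2⟩
        have : x ∈ s := ⟨h1, fun hz => hy ⟨x, hz, h2⟩⟩
        rw [hsU] at this
        exact mem_iUnion.1 this
      · rintro ⟨⟨i, hi⟩, h2⟩
        exact ⟨hsΩ hi.1, h2⟩
    refine (tsum_congr_set_coe g this).trans ?_
    exact ENNReal.tsum_biUnion (fun i _ j _ hij =>
      (hdisj hij).mono (fun x hx => hx.1) (fun x hx => hx.1))
  rw [lintegral_congr_ae hae, lintegral_tsum (fun i => (hGm i).aemeasurable)]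
  have h1 : ∀ i, ∫⁻ y, G i y = ∫⁻ x in s ∩ t i, g x * ENNReal.ofReal |(F' x).det| := by
    intro i
    have e1 : ∫⁻ y, G i y = ∫⁻ y in F '' (s ∩ t i), G i y := by
      rw [← lintegral_indicator (measurable_image_of_fderivWithin (hmeas i) (hder i) (hinj i))]
      congr 1
      funext y
      by_cases hy : y ∈ F '' (s ∩ t i)
      · rw [indicator_of_mem hy]
      · rw [indicator_of_notMem hy, hG0 i y hy]
    rw [e1, lintegral_image_eq_lintegral_abs_det_fderiv_mul volume (hmeas i) (hder i) (hinj i)]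
    refine setLIntegral_congr_fun (hmeas i) (fun x hx => ?_)
    rw [hGF i x hx, mul_comm]
  simp_rw [h1]
  rw [← lintegral_iUnion hmeas hdisj, ← hsU]
  have hΩu : Ω = s ∪ Z := (sdiff_union_of_subset hZΩ).symm
  conv_rhs => rw [hΩu, lintegral_union h0 disjoint_sdiff_left]
  have : ∫⁻ x in Z, g x * ENNReal.ofReal |(F' x).det| = 0 := by
    rw [setLIntegral_congr_fun (g := fun _ => 0) h0 (fun x hx => by simp [hx.2])]
    simp
  rw [this, add_zero]

/-- Change-of-variables (area) formula on the graph of `Ψ`: for `d = n + 1 ≥ 2`,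
`l ∈ {1,…,d−1}`, and every nonnegative continuous `u` on `[−2ρ,2ρ]^d`,
`∫_{(−2ρ,2ρ)^{d−1}} Σ_{t ∈ X_l(ξ°)} u(ξ° with t inserted as l-th coordinate) dξ°
  = ∫_{(−2ρ,2ρ)^{d−1}} u(ξ̂, Ψ(ξ̂)) |∂_{ξ_l}Ψ(ξ̂)| dξ̂`,
both sides interpreted in `[0,∞]`. -/
theorem graph_change_of_variables (n : ℕ) (hn : 1 ≤ n) (ρ : ℝ) (hρ : 0 < ρ)
    (Ψ : (Fin n → ℝ) → ℝ)
    (hΨ : ContDiffOn ℝ 2 Ψ (closure (cube n ρ)))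
    (hmaps : ∀ x ∈ closure (cube n ρ), Ψ x ∈ Set.Ioo (-(2 * ρ)) (2 * ρ))
    (l : Fin n)
    (u : (Fin (n + 1) → ℝ) → ℝ)
    (hu : ContinuousOn u (closure (cube (n + 1) ρ)))
    (hupos : ∀ ξ ∈ closure (cube (n + 1) ρ), 0 ≤ u ξ) :
    (∫⁻ ξ in cube n ρ,
        ∑' t : Xset n ρ Ψ l.castSucc ξ,
          ENNReal.ofReal (u ((l.castSucc).insertNth (t : ℝ) ξ)))
      = ∫⁻ ξ in cube n ρ,
          ENNReal.ofReal (u (Fin.snoc ξ (Ψ ξ))) *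
          ENNReal.ofReal |fderivWithin ℝ Ψ (closure (cube n ρ)) ξ (Pi.single l 1)| := by
  classical
  have hopen : IsOpen (cube n ρ) := isOpen_set_pi finite_univ (fun _ _ => isOpen_Ioo)
  have hmeasC : MeasurableSet (cube n ρ) := hopen.measurableSet
  have hnhds : ∀ x ∈ cube n ρ, closure (cube n ρ) ∈ nhds x := fun x hx =>
    Filter.mem_of_superset (hopen.mem_nhds hx) subset_closure
  have hdiff : ∀ x ∈ cube n ρ, DifferentiableAt ℝ Ψ x := fun x hx =>
    ((hΨ x (subset_closure hx)).contDiffAt (hnhds x hx)).differentiableAt (by norm_num)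
  have hΨc : ContinuousOn Ψ (cube n ρ) := fun x hx =>
    (hdiff x hx).continuousAt.continuousWithinAt
  let F : (Fin n → ℝ) → (Fin n → ℝ) := fun x => x + (Ψ x - x l) • Pi.single l (1 : ℝ)
  let L : (Fin n → ℝ) → (Fin n → ℝ) →L[ℝ] ℝ := fun x =>
    fderiv ℝ Ψ x - ContinuousLinearMap.proj l
  let F' : (Fin n → ℝ) → (Fin n → ℝ) →L[ℝ] (Fin n → ℝ) := fun x =>
    ContinuousLinearMap.id ℝ (Fin n → ℝ) + (L x).smulRight (Pi.single l (1 : ℝ))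
  have hF : ∀ x ∈ cube n ρ, HasFDerivWithinAt F (F' x) (cube n ρ) x := by
    intro x hx
    refine HasFDerivAt.hasFDerivWithinAt ?_
    exact (hasFDerivAt_id x).add
      (((hdiff x hx).hasFDerivAt.sub (ContinuousLinearMap.proj (R := ℝ) (φ := fun _ : Fin n => ℝ) l).hasFDerivAt).smul_const _)
  have hdet : ∀ x, (F' x).det = fderiv ℝ Ψ x (Pi.single l 1) := by
    intro x
    have : ((F' x : (Fin n → ℝ) →L[ℝ] (Fin n → ℝ)) : (Fin n → ℝ) →ₗ[ℝ] (Fin n → ℝ)) =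
        LinearMap.transvection (L x : (Fin n → ℝ) →ₗ[ℝ] ℝ) (Pi.single l (1 : ℝ)) := by
      ext1 v
      rfl
    rw [ContinuousLinearMap.det, this, LinearMap.transvection.det]
    simp [L]
  have h0 : MeasurableSet {x | x ∈ cube n ρ ∧ (F' x).det = 0} := by
    simp_rw [hdet]
    exact hmeasC.inter
      ((measurable_fderiv_apply_const ℝ Ψ (Pi.single l 1)) (measurableSet_singleton 0))
  have hsnoc : ∀ x ∈ cube n ρ, Fin.snoc (α := fun _ => ℝ) x (Ψ x) ∈ cube (n + 1) ρ := by
    intro x hx i _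
    refine Fin.lastCases ?_ (fun j => ?_) i
    · simpa using hmaps x (subset_closure hx)
    · simpa using hx j (mem_univ _)
  have hsc : ContinuousOn (fun x : Fin n → ℝ => (Fin.snoc x (Ψ x) : Fin (n + 1) → ℝ))
      (cube n ρ) := by
    refine continuousOn_pi.2 (fun i => ?_)
    refine Fin.lastCases ?_ (fun j => ?_) i
    · simpa using hΨc
    · simpa using (continuous_apply j).continuousOn
  let g : (Fin n → ℝ) → ENNReal :=
    (cube n ρ).piecewise (fun x => ENNReal.ofReal (u (Fin.snoc x (Ψ x)))) (fun _ => 0)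
  have hg : Measurable g := by
    refine ContinuousOn.measurable_piecewise ?_ continuousOn_const hmeasC
    exact ENNReal.continuous_ofReal.comp_continuousOn
      (hu.comp hsc (fun x hx => subset_closure (hsnoc x hx)))
  have harea := area_formula_aux F F' (cube n ρ) hmeasC hF h0 g hg
  have hR : ∫⁻ x in cube n ρ, g x * ENNReal.ofReal |(F' x).det| = ∫⁻ ξ in cube n ρ,
          ENNReal.ofReal (u (Fin.snoc ξ (Ψ ξ))) *
          ENNReal.ofReal |fderivWithin ℝ Ψ (closure (cube n ρ)) ξ (Pi.single l 1)| := by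
    refine setLIntegral_congr_fun hmeasC (fun x hx => ?_)
    simp only [g, piecewise_eq_of_mem _ _ _ hx, hdet]
    rw [fderivWithin_of_mem_nhds (hnhds x hx)]
  rw [← hR, ← harea]
  -- the permutation
  let τ : Fin (n + 1) → Fin n := Fin.snoc (α := fun _ => Fin n) id l
  have hτinj : Function.Injective (fun j => τ (l.castSucc.succAbove j)) := by
    intro i j hij
    have hi := Fin.succAbove_ne l.castSucc i
    have hj := Fin.succAbove_ne l.castSucc j
    apply Fin.succAbove_right_injective (p := l.castSucc)
    simp only at hij
    generalize l.castSucc.succAbove i = a at *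
    generalize l.castSucc.succAbove j = b at *
    revert hi hj hij
    refine Fin.lastCases ?_ (fun a => ?_) a <;> refine Fin.lastCases ?_ (fun b => ?_) b
    · simp
    · intro _ h3 h
      simp only [τ, Fin.snoc_last, Fin.snoc_castSucc, id] at h
      exact absurd (by rw [h]) h3
    · intro h3 _ h
      simp only [τ, Fin.snoc_last, Fin.snoc_castSucc, id] at h
      exact absurd (by rw [h]) h3
    · intro _ _ h
      simp only [τ, Fin.snoc_castSucc, id] at h
      rw [h]
  let σ : Fin n ≃ Fin n := Equiv.ofBijective _ (Finite.injective_iff_bijective.1 hτinj)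
  have hσ : ∀ j, σ j = τ (l.castSucc.succAbove j) := fun j => rfl
  have hFσ : ∀ x j, F x (σ j) = (Fin.snoc x (Ψ x) : Fin (n + 1) → ℝ) (l.castSucc.succAbove j) := by
    intro x j
    rw [hσ]
    have hj := Fin.succAbove_ne l.castSucc j
    generalize l.castSucc.succAbove j = b at *
    revert hj
    refine Fin.lastCases ?_ (fun b => ?_) b
    · intro _; simp [τ, F]
    · intro hb
      have : b ≠ l := fun h => hb (by rw [h])
      simp [τ, F, this]
  let e : (Fin n → ℝ) ≃ᵐ (Fin n → ℝ) := MeasurableEquiv.arrowCongr' σ (MeasurableEquiv.refl ℝ)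
  have he : MeasurePreserving e :=
    volume_preserving_arrowCongr' σ (MeasurableEquiv.refl ℝ) (MeasurePreserving.id _)
  have hev : ∀ ξ j, e ξ (σ j) = ξ j := by
    intro ξ j
    change ξ (σ.symm (σ j)) = ξ j
    rw [Equiv.symm_apply_apply]
  have hFe : ∀ x ξ, F x = e ξ ↔
      ∀ j, (Fin.snoc x (Ψ x) : Fin (n + 1) → ℝ) (l.castSucc.succAbove j) = ξ j := by
    intro x ξ
    constructor
    · intro h j
      rw [← hFσ, h, hev]
    · intro h
      funext k
      obtain ⟨j, rfl⟩ := σ.surjective k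
      rw [hFσ, h, hev]
  have hins : ∀ x ξ, F x = e ξ →
      l.castSucc.insertNth (α := fun _ => ℝ) (x l) ξ = (Fin.snoc x (Ψ x) : Fin (n + 1) → ℝ) := by
    intro x ξ h
    rw [hFe] at h
    rw [Fin.insertNth_eq_iff]
    refine ⟨by simp, ?_⟩
    funext j
    exact (h j).symm
  rw [← he.lintegral_comp_emb e.measurableEmbedding, ← lintegral_indicator hmeasC]
  congr 1
  funext ξ
  by_cases hξ : ξ ∈ cube n ρ
  · rw [indicator_of_mem hξ]
    have hX : ∀ t ∈ Xset n ρ Ψ l.castSucc ξ, l.castSucc.insertNth (α := fun _ => ℝ) t ξ =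
        Fin.snoc (α := fun _ => ℝ) (Fin.init (l.castSucc.insertNth (α := fun _ => ℝ) t ξ))
          (Ψ (Fin.init (l.castSucc.insertNth (α := fun _ => ℝ) t ξ))) := by
      intro t ht
      have h2 := ht.2.2
      rw [← h2, Fin.snoc_init_self]
    let E : Xset n ρ Ψ l.castSucc ξ ≃ {x | x ∈ cube n ρ ∧ F x = e ξ} :=
      { toFun := fun t => ⟨Fin.init (l.castSucc.insertNth (α := fun _ => ℝ) (t : ℝ) ξ), by
          refine ⟨fun i _ => t.2.2.1 i.castSucc, ?_⟩
          rw [hFe]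
          intro j
          rw [← hX t t.2, Fin.insertNth_apply_succAbove]⟩
        invFun := fun x => ⟨x.1 l, by
          obtain ⟨x, hx, hxe⟩ := x
          refine ⟨hx l (mem_univ _), ?_⟩
          simp only
          rw [hins x ξ hxe]
          exact ⟨fun i => hsnoc x hx i (mem_univ _), by simp [Fin.init_snoc]⟩⟩
        left_inv := by
          rintro ⟨t, ht⟩
          apply Subtype.ext
          simp [Fin.init]
        right_inv := by
          rintro ⟨x, hx, hxe⟩
          apply Subtype.ext
          simp only
          rw [hins x ξ hxe, Fin.init_snoc] }
    rw [← E.tsum_eq]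
    refine tsum_congr (fun t => ?_)
    have hm : (E t : Fin n → ℝ) ∈ cube n ρ := (E t).2.1
    simp only [g, piecewise_eq_of_mem _ _ _ hm]
    exact congrArg (fun z => ENNReal.ofReal (u z)) (hX t t.2)
  · rw [indicator_of_notMem hξ]
    have : IsEmpty {x | x ∈ cube n ρ ∧ F x = e ξ} := by
      refine ⟨fun x => hξ ?_⟩
      obtain ⟨x, hx, hxe⟩ := x
      intro j _
      rw [← (hFe x ξ).1 hxe j]
      exact hsnoc x hx _ (mem_univ _)
    exact tsum_empty.symm
end

section
/- Let d₁ > 0. There is a constant C, depending only on d₁, with the following property. Let J_k = (s_k, t_k), k = 1,…,N, be finitely many open intervals in ℝ whose closures are pairwise disjoint and which satisfy |J_k| ≤ d₁ for all k, and let J = ∪_k J_k. Then for every T ∈ (0,1], Σ_{k=1}^{N} ∫_{t ∉ J} ∫_{s ∈ J_k, |t−s| ≥ T} |t−s|^{−2} ds dt ≤ C · N · log(1/T + 1). -/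
open MeasureTheory

theorem aux_refl (S : Set ℝ) (f : ℝ → ENNReal) :
    ∫⁻ x in S, f x = ∫⁻ x in (fun x : ℝ => -x) ⁻¹' S, f (-x) := by
  have h := (Measure.measurePreserving_neg (volume : Measure ℝ)).setLIntegral_comp_preimage_emb
    (MeasurableEquiv.neg ℝ).measurableEmbedding f S
  exact h.symm

theorem aux_right (b y T : ℝ) (hT : 0 < T) (hy : y < b) :
    ∫⁻ x in Set.Ici b, ENNReal.ofReal (4 / (|x - y| + T) ^ 2)
      = ENNReal.ofReal (4 / (b - y + T)) := by
  have hd : ∀ x ∈ Set.Ici b, HasDerivAt (fun x : ℝ => -(4 / (x - y + T)))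
      (4 / (x - y + T) ^ 2) x := by
    intro x hx
    have hx' : b ≤ x := hx
    have h0 : x - y + T ≠ 0 := by linarith
    have h1 : HasDerivAt (fun x : ℝ => x - y + T) 1 x :=
      ((hasDerivAt_id x).sub_const y).add_const T
    have := ((hasDerivAt_const x (4:ℝ)).div h1 h0).neg
    refine this.congr_deriv ?_
    simp
    ring
  have hp : ∀ x ∈ Set.Ioi b, 0 ≤ 4 / (x - y + T) ^ 2 := fun x _ => by positivity
  have ht : Filter.Tendsto (fun x : ℝ => -(4 / (x - y + T))) Filter.atTop (nhds 0) := by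
    rw [← neg_zero]
    refine Filter.Tendsto.neg ?_
    refine Filter.Tendsto.div_atTop tendsto_const_nhds ?_
    refine Filter.tendsto_atTop_add_const_right _ _ ?_
    exact Filter.tendsto_atTop_add_const_right _ (-y) Filter.tendsto_id
  have hi := integrableOn_Ioi_deriv_of_nonneg' hd hp ht
  have he := integral_Ioi_of_hasDerivAt_of_nonneg' hd hp ht
  rw [setLIntegral_congr Ioi_ae_eq_Ici.symm,
    setLIntegral_congr_fun (g := fun x => ENNReal.ofReal (4 / (x - y + T) ^ 2)) measurableSet_Ioi]
  · rw [← ofReal_integral_eq_lintegral_ofReal hi, he]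
    · simp
    · exact Filter.Eventually.of_forall fun x => by
        show 0 ≤ 4 / (x - y + T) ^ 2
        positivity
  · intro x hx
    have hx' : b < x := hx
    simp only
    rw [abs_of_pos (by linarith)]

theorem aux_outer (a b T : ℝ) (hT : 0 < T) (hab : a < b) :
    ∫⁻ y in Set.Ioo a b, ENNReal.ofReal (4 / (b - y + T))
      = ENNReal.ofReal (4 * Real.log ((b - a) / T + 1)) := by
  have hd : ∀ x ∈ Set.uIcc a b, HasDerivAt (fun x : ℝ => -(4 * Real.log (b - x + T)))
      (4 / (b - x + T)) x := by
    intro x hx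
    rw [Set.uIcc_of_le hab.le] at hx
    have h0 : b - x + T ≠ 0 := by linarith [hx.2]
    have h1 : HasDerivAt (fun x : ℝ => b - x + T) (-1) x :=
      ((hasDerivAt_id x).const_sub b).add_const T
    have := ((h1.log h0).const_mul 4).neg
    refine this.congr_deriv ?_
    ring
  have hc : ContinuousOn (fun x : ℝ => 4 / (b - x + T)) (Set.uIcc a b) := by
    refine ContinuousOn.div (by fun_prop) (by fun_prop) ?_
    intro x hx
    rw [Set.uIcc_of_le hab.le] at hx
    linarith [hx.2]
  have he := intervalIntegral.integral_eq_sub_of_hasDerivAt hd hc.intervalIntegrable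
  have hi := hc.intervalIntegrable (μ := volume)
  rw [intervalIntegrable_iff_integrableOn_Ioc_of_le hab.le] at hi
  rw [intervalIntegral.integral_of_le hab.le] at he
  rw [setLIntegral_congr Ioo_ae_eq_Ioc, ← ofReal_integral_eq_lintegral_ofReal hi, he]
  · congr 1
    have : (b - a) / T + 1 = (b - a + T) / T := by field_simp
    rw [this, Real.log_div (by linarith) hT.ne']
    simp
    ring
  · refine (ae_restrict_iff' measurableSet_Ioc).2 (Filter.Eventually.of_forall fun x hx => ?_)
    have : 0 < b - x + T := by linarith [hx.2]
    show 0 ≤ 4 / (b - x + T)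
    positivity

theorem aux_swap (a b T : ℝ) (S : Set ℝ) :
    ∫⁻ x in S, ∫⁻ y in Set.Ioo a b, ENNReal.ofReal (4 / (|x - y| + T) ^ 2)
     = ∫⁻ y in Set.Ioo a b, ∫⁻ x in S, ENNReal.ofReal (4 / (|x - y| + T) ^ 2) := by
  refine lintegral_lintegral_swap (Measurable.aemeasurable ?_)
  unfold Function.uncurry
  fun_prop

theorem aux_Ici (a b T : ℝ) (hT : 0 < T) (hab : a < b) :
    ∫⁻ x in Set.Ici b, ∫⁻ y in Set.Ioo a b, ENNReal.ofReal (4 / (|x - y| + T) ^ 2)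
      = ENNReal.ofReal (4 * Real.log ((b - a) / T + 1)) := by
  rw [aux_swap, ← aux_outer a b T hT hab]
  refine setLIntegral_congr_fun measurableSet_Ioo fun y hy => ?_
  exact aux_right b y T hT hy.2

theorem aux_Iic (a b T : ℝ) (hT : 0 < T) (hab : a < b) :
    ∫⁻ x in Set.Iic a, ∫⁻ y in Set.Ioo a b, ENNReal.ofReal (4 / (|x - y| + T) ^ 2)
      = ENNReal.ofReal (4 * Real.log ((b - a) / T + 1)) := by
  have h := aux_Ici (-b) (-a) T hT (by linarith)
  rw [show -a - -b = b - a by ring] at h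
  rw [← h, aux_refl]
  have e1 : (fun x : ℝ => -x) ⁻¹' Set.Iic a = Set.Ici (-a) := by
    ext x; simp [neg_le]
  have e2 : (fun x : ℝ => -x) ⁻¹' Set.Ioo a b = Set.Ioo (-b) (-a) := by
    ext x; simp only [Set.mem_preimage, Set.mem_Ioo]; constructor <;> rintro ⟨h1, h2⟩ <;> constructor <;> linarith
  rw [e1]
  refine lintegral_congr fun x => ?_
  rw [aux_refl, e2]
  refine lintegral_congr fun y => ?_
  rw [show -x - -y = -(x - y) by ring, abs_neg]

theorem aux_log (d L T : ℝ) (hL : 0 < L) (hd : L ≤ d) (hT : 0 < T) :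
    Real.log (L / T + 1) ≤ (1 + d) * Real.log (1 / T + 1) := by
  have hT' : 0 < 1 / T := by positivity
  have h := one_add_mul_self_le_rpow_one_add (s := 1 / T) (by linarith) (p := 1 + d) (by linarith)
  rw [← Real.log_rpow (by linarith)]
  apply Real.log_le_log (by positivity)
  rw [add_comm (1 / T)]
  refine le_trans ?_ h
  have : L / T = L * (1 / T) := by ring
  rw [this]
  nlinarith

theorem aux_one (d a b T : ℝ) (hab : a < b) (hd : b - a ≤ d) (hT : 0 < T) (S : Set ℝ)
    (hS : S ⊆ Set.Iic a ∪ Set.Ici b) :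
    ∫⁻ x in S, ∫⁻ y in {y : ℝ | y ∈ Set.Ioo a b ∧ T ≤ |x - y|},
              ENNReal.ofReal ((|x - y| ^ 2)⁻¹)
      ≤ ENNReal.ofReal (8 * (1 + d) * Real.log (1 / T + 1)) := by
  have hlog := aux_log d (b - a) T (by linarith) hd hT
  have hnn : 0 ≤ Real.log ((b - a) / T + 1) := by
    apply Real.log_nonneg
    have : 0 < (b - a) / T := div_pos (by linarith) hT
    linarith
  calc _ ≤ ∫⁻ x in S, ∫⁻ y in Set.Ioo a b, ENNReal.ofReal (4 / (|x - y| + T) ^ 2) := by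
        refine lintegral_mono fun x => ?_
        have hm : MeasurableSet {y : ℝ | y ∈ Set.Ioo a b ∧ T ≤ |x - y|} := by
          have hf : Measurable fun y : ℝ => |x - y| := by fun_prop
          exact measurableSet_Ioo.inter (measurableSet_le measurable_const hf)
        refine le_trans (setLIntegral_mono' hm ?_)
          (lintegral_mono_set (fun y hy => hy.1))
        intro y hy
        apply ENNReal.ofReal_le_ofReal
        have h := hy.2
        have h0 : 0 < |x - y| := by linarith
        rw [inv_eq_one_div, div_le_div_iff₀ (by positivity) (by positivity)]
        nlinarith
    _ ≤ ∫⁻ x in Set.Iic a ∪ Set.Ici b,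
          ∫⁻ y in Set.Ioo a b, ENNReal.ofReal (4 / (|x - y| + T) ^ 2) := lintegral_mono_set hS
    _ ≤ _ := lintegral_union_le _ _ _
    _ = ENNReal.ofReal (4 * Real.log ((b - a) / T + 1) + 4 * Real.log ((b - a) / T + 1)) := by
        rw [aux_Iic a b T hT hab, aux_Ici a b T hT hab, ENNReal.ofReal_add] <;> positivity
    _ ≤ _ := by
        apply ENNReal.ofReal_le_ofReal
        linarith


/-- There is a constant `C = C(d₁)` such that for any finite collection of open intervals
`J_k = (s_k, t_k)` with pairwise disjoint closures and lengths `≤ d₁`, with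
`J = ∪_k J_k`, and every `T ∈ (0,1]`:
`Σ_k ∫_{t ∉ J} ∫_{s ∈ J_k, |t−s| ≥ T} |t−s|⁻² ds dt ≤ C N log(1/T + 1)`. -/
theorem intervals_log_integral_bound (d₁ : ℝ) (hd₁ : 0 < d₁) :
    ∃ C : ℝ, ∀ (N : ℕ) (s t : Fin N → ℝ),
      (∀ k, s k < t k) →
      (∀ k, t k - s k ≤ d₁) →
      (∀ k j, k ≠ j → Disjoint (Set.Icc (s k) (t k)) (Set.Icc (s j) (t j))) →
      ∀ T : ℝ, 0 < T → T ≤ 1 →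
        ∑ k : Fin N,
          ∫⁻ x in (⋃ j, Set.Ioo (s j) (t j))ᶜ,
            ∫⁻ y in {y : ℝ | y ∈ Set.Ioo (s k) (t k) ∧ T ≤ |x - y|},
              ENNReal.ofReal ((|x - y| ^ 2)⁻¹)
          ≤ ENNReal.ofReal (C * N * Real.log (1 / T + 1)) := by
  refine ⟨8 * (1 + d₁), fun N s t hst hlen _ T hT _ => ?_⟩
  have hl : 0 ≤ Real.log (1 / T + 1) := by
    apply Real.log_nonneg
    have : 0 < 1 / T := by positivity
    linarith
  refine le_trans (Finset.sum_le_sum fun k _ =>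
    aux_one d₁ (s k) (t k) T (hst k) (hlen k) hT _ ?_) ?_
  · intro x hx
    by_contra h
    simp only [Set.mem_union, Set.mem_Iic, Set.mem_Ici, not_or, not_le] at h
    exact hx (Set.mem_iUnion.2 ⟨k, h.1, h.2⟩)
  · rw [Finset.sum_const, Finset.card_univ, Fintype.card_fin, ← ENNReal.ofReal_nsmul]
    apply ENNReal.ofReal_le_ofReal
    rw [nsmul_eq_mul]
    apply le_of_eq
    ring
end

section
/- Let d ≥ 2 and let Ω ⊂ ℝ^d be a bounded open set with the following Lipschitz-graph structure: there are finitely many bounded open sets D₁,…,D_J and an open set D̃ with ℝ^d = D₁ ∪ … ∪ D_J ∪ D̃, constants 0 < c ≤ C₀, and for each j an orthonormal coordinate system ξ = (ξ̂, ξ_d) and a Lipschitz function Ψ_j : ℝ^{d−1} → ℝ such that c·|ξ_d − Ψ_j(ξ̂)| ≤ ρ(ξ) ≤ C₀·|ξ_d − Ψ_j(ξ̂)| for all ξ ∈ D_j, and c·⟨ξ⟩ ≤ ρ(ξ) for all ξ ∈ D̃, where ρ(ξ) = dist(ξ, ∂Ω) and ⟨ξ⟩ = √(1+|ξ|²). Let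 β > d and K > 0, and let a_T (0 < T ≤ 1) be smooth functions on ℝ^d satisfying |a_T(ξ) − χ_Ω(ξ)| ≤ K·⟨ρ(ξ)/T⟩^{−β} and, for a fixed integer m ≥ 1, |∇^m a_T(ξ)| ≤ K·(T + min{ρ(ξ),1})^{−m}·⟨ρ(ξ)/T⟩^{−β} for all ξ. Then there is a constant C′, independent of T, such that for all T ∈ (0,1]: (i) for every δ > d/β, ∫_{ℝ^d} |a_T(ξ) − χ_Ω(ξ)|^δ dξ ≤ C′·T (with C′ also depending on δ); and (ii) ∫_{ℝ^d} |∇^m a_T(ξ)| dξ ≤ C′·T^{1−m}. -/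
open MeasureTheory

lemma aux_oneD (p : ℝ) (hp : 1 < p) : ∃ I : ℝ, 0 ≤ I ∧ ∀ s b : ℝ, 0 < s →
    ∫⁻ y : ℝ, ENNReal.ofReal ((1 + ((y - b) / s) ^ 2) ^ (-p / 2)) = ENNReal.ofReal (I * s) := by
  have hint : Integrable (fun x : ℝ => (1 + x ^ 2) ^ (-p / 2)) := by
    have := integrable_rpow_neg_one_add_norm_sq (E := ℝ) (μ := volume) (r := p) (by simpa using hp)
    simpa using this
  refine ⟨∫ x : ℝ, (1 + x ^ 2) ^ (-p / 2), integral_nonneg fun x => by positivity, ?_⟩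
  intro s b hs
  have h1 := hint.comp_div hs.ne'
  rw [lintegral_sub_right_eq_self (fun y : ℝ => ENNReal.ofReal ((1 + (y / s) ^ 2) ^ (-p / 2))) b,
    ← ofReal_integral_eq_lintegral_ofReal h1 (Filter.Eventually.of_forall fun x => by positivity)]
  rw [Measure.integral_comp_div (fun x : ℝ => (1 + x ^ 2) ^ (-p / 2)), abs_of_pos hs, smul_eq_mul,
    mul_comm]

lemma aux_graph (n : ℕ) (p : ℝ) (hp : 1 < p) (Ψ : EuclideanSpace ℝ (Fin n) → ℝ)
    (hΨ : Continuous Ψ) (R : ℝ) : ∃ C : ℝ, 0 ≤ C ∧ ∀ s : ℝ, 0 < s →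
    ∫⁻ η : EuclideanSpace ℝ (Fin (n + 1)),
      (Metric.closedBall (0 : Fin n → ℝ) R).indicator 1 (fun i => η i.castSucc) *
      ENNReal.ofReal ((1 + ((η (Fin.last n) - Ψ (WithLp.toLp 2 fun i => η i.castSucc)) / s) ^ 2)
        ^ (-p / 2)) ≤ ENNReal.ofReal (C * s) := by
  obtain ⟨I, hI, h⟩ := aux_oneD p hp
  refine ⟨(volume (Metric.closedBall (0 : Fin n → ℝ) R)).toReal * I, by positivity, ?_⟩
  intro s hs
  let G : ℝ × (Fin n → ℝ) → ENNReal := fun q =>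
    (Metric.closedBall (0 : Fin n → ℝ) R).indicator 1 q.2 *
      ENNReal.ofReal ((1 + ((q.1 - Ψ (WithLp.toLp 2 q.2)) / s) ^ 2) ^ (-p / 2))
  have hmp := (volume_preserving_piFinSuccAbove (fun _ : Fin (n+1) => ℝ) (Fin.last n)).comp
    (PiLp.volume_preserving_ofLp (Fin (n + 1)))
  have hemb : MeasurableEmbedding ((MeasurableEquiv.piFinSuccAbove (fun _ : Fin (n+1) => ℝ) (Fin.last n)) ∘ (WithLp.ofLp : EuclideanSpace ℝ (Fin (n+1)) → _)) :=
    (MeasurableEquiv.measurableEmbedding _).comp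
      (MeasurableEquiv.toLp 2 (Fin (n+1) → ℝ)).symm.measurableEmbedding
  have hG := hmp.lintegral_comp_emb hemb G
  have hcont : Continuous fun q : ℝ × (Fin n → ℝ) =>
      (1 + ((q.1 - Ψ (WithLp.toLp 2 q.2)) / s) ^ 2) ^ (-p / 2) := by
    refine Continuous.rpow_const (by fun_prop) fun q => Or.inl (by positivity)
  have hGm : Measurable G := by
    refine Measurable.mul ?_ (hcont.measurable.ennreal_ofReal)
    exact (measurable_one.indicator Metric.isClosed_closedBall.measurableSet).comp measurable_snd
  calc _ = ∫⁻ q, G q := by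
        rw [← hG]
        refine lintegral_congr fun η => ?_
        simp [G, MeasurableEquiv.piFinSuccAbove, Fin.insertNthEquiv, Fin.removeNth]
        rfl
    _ = ∫⁻ x : Fin n → ℝ, ∫⁻ y : ℝ, G (y, x) := by
        rw [Measure.volume_eq_prod, lintegral_prod_symm' _ hGm]
    _ = ∫⁻ x : Fin n → ℝ, (Metric.closedBall (0 : Fin n → ℝ) R).indicator 1 x * ENNReal.ofReal (I * s) := by
        refine lintegral_congr fun x => ?_
        simp only [G]
        rw [lintegral_const_mul' _ _ (by by_cases hx : x ∈ Metric.closedBall (0 : Fin n → ℝ) R <;> simp [Set.indicator, hx]), h s _ hs]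
    _ = volume (Metric.closedBall (0 : Fin n → ℝ) R) * ENNReal.ofReal (I * s) := by
        rw [lintegral_mul_const' _ _ ENNReal.ofReal_ne_top,
          lintegral_indicator_one Metric.isClosed_closedBall.measurableSet]
    _ ≤ _ := by
        rw [mul_assoc, ENNReal.ofReal_mul (q := I * s) ENNReal.toReal_nonneg, ENNReal.ofReal_toReal]
        exact (isCompact_closedBall _ _).measure_lt_top.ne

lemma aux_key (n : ℕ)
    (ρ : EuclideanSpace ℝ (Fin (n+1)) → ℝ) (hρ0 : ∀ ξ, 0 ≤ ρ ξ)
    (J : ℕ) (D : Fin J → Set (EuclideanSpace ℝ (Fin (n+1))))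
    (hDo : ∀ j, IsOpen (D j)) (hDb : ∀ j, Bornology.IsBounded (D j))
    (Dt : Set (EuclideanSpace ℝ (Fin (n+1)))) (hDto : IsOpen Dt)
    (hcover : (⋃ j, D j) ∪ Dt = Set.univ)
    (c : ℝ) (hc : 0 < c)
    (e : Fin J → (EuclideanSpace ℝ (Fin (n+1)) ≃ₗᵢ[ℝ] EuclideanSpace ℝ (Fin (n+1))))
    (Ψ : Fin J → (EuclideanSpace ℝ (Fin n) → ℝ))
    (hΨ : ∀ j, Continuous (Ψ j))
    (hgraph : ∀ j, ∀ ξ ∈ D j,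
      c * |e j ξ (Fin.last n) - Ψ j (WithLp.toLp 2 (fun i : Fin n => e j ξ i.castSucc))| ≤ ρ ξ)
    (hfar : ∀ ξ ∈ Dt, c * Real.sqrt (1 + ‖ξ‖ ^ 2) ≤ ρ ξ)
    (p : ℝ) (hp : ((n + 1 : ℕ) : ℝ) < p) (hp1 : 1 < p) :
    ∃ C : ℝ, 0 ≤ C ∧ ∀ T : ℝ, 0 < T → T ≤ 1 →
      ∫⁻ ξ, ENNReal.ofReal (Real.sqrt (1 + (ρ ξ / T) ^ 2) ^ (-p)) ≤ ENNReal.ofReal (C * T) := by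
  have hsq : ∀ t : ℝ, Real.sqrt (1 + t ^ 2) ^ (-p) = (1 + t ^ 2) ^ (-p / 2) := by
    intro t
    rw [Real.sqrt_eq_rpow, ← Real.rpow_mul (by positivity)]
    congr 1; ring
  have hmono : ∀ s t : ℝ, 0 ≤ s → s ≤ t → (1 + t ^ 2) ^ (-p / 2) ≤ (1 + s ^ 2) ^ (-p / 2) := by
    intro s t hs hst
    exact Real.rpow_le_rpow_of_nonpos (by positivity) (by gcongr) (by linarith)
  have hR : ∀ j, ∃ R : ℝ, ∀ ξ ∈ D j, ‖ξ‖ ≤ R := fun j => (hDb j).exists_norm_le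
  choose R hR using hR
  choose C hC0 hC using fun j => aux_graph n p hp1 (Ψ j) (hΨ j) (R j)
  have hint := integrable_rpow_neg_one_add_norm_sq (E := EuclideanSpace ℝ (Fin (n+1)))
    (μ := volume) (r := p) (by simpa using hp)
  set B := ∫ x : EuclideanSpace ℝ (Fin (n+1)), (1 + ‖x‖ ^ 2) ^ (-p / 2) with hB
  have hB0 : 0 ≤ B := integral_nonneg fun x => by positivity
  refine ⟨(∑ j, C j * c⁻¹) + c ^ (-p) * B, ?_, ?_⟩
  · have : 0 ≤ ∑ j, C j * c⁻¹ := Finset.sum_nonneg fun j _ => mul_nonneg (hC0 j) (by positivity)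
    positivity
  intro T hT hT1
  simp_rw [hsq]
  have h1 : ∀ j, ∫⁻ ξ in D j, ENNReal.ofReal ((1 + (ρ ξ / T) ^ 2) ^ (-p / 2))
      ≤ ENNReal.ofReal (C j * c⁻¹ * T) := by
    intro j
    refine le_trans ?_ (le_trans (hC j (c⁻¹ * T) (by positivity)) (by rw [mul_assoc]))
    rw [← (e j).measurePreserving.lintegral_comp_emb
      (e j).toHomeomorph.measurableEmbedding, ← lintegral_indicator (hDo j).measurableSet]
    refine lintegral_mono fun ξ => ?_
    by_cases hξ : ξ ∈ D j
    · rw [Set.indicator_of_mem hξ, Set.indicator_of_mem]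
      · simp only [Pi.one_apply, one_mul]
        refine ENNReal.ofReal_le_ofReal ?_
        rw [← sq_abs (_ / (c⁻¹ * T))]
        refine hmono _ _ (abs_nonneg _) ?_
        rw [abs_div, abs_of_pos (show 0 < c⁻¹ * T by positivity), ← div_div, div_inv_eq_mul, mul_comm]
        gcongr
        exact hgraph j ξ hξ
      · rw [mem_closedBall_zero_iff, pi_norm_le_iff_of_nonneg ((norm_nonneg _).trans (hR j ξ hξ))]
        intro i
        refine le_trans (PiLp.norm_apply_le (e j ξ) _) ?_
        rw [(e j).norm_map]
        exact hR j ξ hξ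
    · rw [Set.indicator_of_notMem hξ]; exact zero_le
  have h2 : ∫⁻ ξ in Dt, ENNReal.ofReal ((1 + (ρ ξ / T) ^ 2) ^ (-p / 2))
      ≤ ENNReal.ofReal (c ^ (-p) * B * T) := by
    have : ∀ ξ ∈ Dt, ENNReal.ofReal ((1 + (ρ ξ / T) ^ 2) ^ (-p / 2)) ≤
        ENNReal.ofReal (c ^ (-p) * T * (1 + ‖ξ‖ ^ 2) ^ (-p / 2)) := by
      intro ξ hξ
      refine ENNReal.ofReal_le_ofReal ?_
      rw [← hsq, ← hsq]
      have hpos : 0 < c * Real.sqrt (1 + ‖ξ‖ ^ 2) / T := by positivity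
      have hle : c * Real.sqrt (1 + ‖ξ‖ ^ 2) / T ≤ Real.sqrt (1 + (ρ ξ / T) ^ 2) := by
        refine le_trans (b := ρ ξ / T) (by gcongr; exact hfar ξ hξ) ?_
        exact Real.le_sqrt_of_sq_le (by linarith)
      refine (Real.rpow_le_rpow_of_nonpos hpos hle (by linarith)).trans ?_
      rw [Real.div_rpow (by positivity) hT.le, Real.mul_rpow hc.le (by positivity),
        Real.rpow_neg hT.le p, div_inv_eq_mul]
      have : T ^ p ≤ T := by
        simpa using Real.rpow_le_rpow_of_exponent_ge hT hT1 hp1.le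
      calc _ ≤ c ^ (-p) * Real.sqrt (1 + ‖ξ‖ ^ 2) ^ (-p) * T := by gcongr
        _ = _ := by ring
    refine (setLIntegral_mono' hDto.measurableSet this).trans ?_
    refine (setLIntegral_le_lintegral _ _).trans ?_
    rw [← ofReal_integral_eq_lintegral_ofReal (hint.const_mul _)
      (Filter.Eventually.of_forall fun x => by positivity), integral_const_mul, ← hB]
    exact ENNReal.ofReal_le_ofReal (by linarith)
  rw [← setLIntegral_univ, ← hcover]
  refine (lintegral_union_le _ _ _).trans ?_
  rw [add_mul, ENNReal.ofReal_add
    (mul_nonneg (Finset.sum_nonneg fun j _ => mul_nonneg (hC0 j) (by positivity)) hT.le)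
    (by positivity)]
  refine add_le_add ?_ h2
  refine (lintegral_iUnion_le _ _).trans ?_
  rw [tsum_fintype, Finset.sum_mul, ENNReal.ofReal_sum_of_nonneg
    fun j _ => mul_nonneg (mul_nonneg (hC0 j) (by positivity)) hT.le]
  exact Finset.sum_le_sum fun j _ => h1 j



/-- Integral bounds for a family of smooth symbols approximating the indicator of a
bounded Lipschitz region `Ω ⊂ ℝ^d`, `d ≥ 2`. The boundary of `Ω` is described by
Lipschitz graphs in finitely many bounded open sets `D j` (in suitable orthonormal
coordinates given by rotations `e j`), and `ρ(ξ) = dist(ξ,∂Ω) ≳ ⟨ξ⟩` on the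
complementary open set `Dt`. If `β > d`, `K > 0`, and the smooth symbols `a_T`
(`0 < T ≤ 1`) satisfy `|a_T − χ_Ω| ≤ K⟨ρ/T⟩^{−β}` and
`|∇^m a_T| ≤ K (T + min(ρ,1))^{−m} ⟨ρ/T⟩^{−β}`, then (i) for every `δ > d/β`,
`∫ |a_T − χ_Ω|^δ ≤ C' T`, and (ii) `∫ |∇^m a_T| ≤ C' T^{1−m}`, with constants
independent of `T`. -/
theorem symbol_integral_bounds (d : ℕ) (hd : 2 ≤ d)
    (Ω : Set (EuclideanSpace ℝ (Fin d))) (hΩo : IsOpen Ω) (hΩb : Bornology.IsBounded Ω)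
    (J : ℕ) (D : Fin J → Set (EuclideanSpace ℝ (Fin d)))
    (hDo : ∀ j, IsOpen (D j)) (hDb : ∀ j, Bornology.IsBounded (D j))
    (Dt : Set (EuclideanSpace ℝ (Fin d))) (hDto : IsOpen Dt)
    (hcover : (⋃ j, D j) ∪ Dt = Set.univ)
    (c C₀ : ℝ) (hc : 0 < c) (hcC : c ≤ C₀)
    (e : Fin J → (EuclideanSpace ℝ (Fin d) ≃ₗᵢ[ℝ] EuclideanSpace ℝ (Fin d)))
    (Ψ : Fin J → (EuclideanSpace ℝ (Fin (d - 1)) → ℝ))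
    (hΨlip : ∀ j, ∃ L : NNReal, LipschitzWith L (Ψ j))
    (hgraph : ∀ j, ∀ ξ ∈ D j,
      c * |e j ξ ⟨d - 1, by omega⟩ -
            Ψ j (WithLp.toLp 2 (fun i : Fin (d - 1) => e j ξ (Fin.castLE (by omega) i)))|
          ≤ Metric.infDist ξ (frontier Ω) ∧
      Metric.infDist ξ (frontier Ω)
          ≤ C₀ * |e j ξ ⟨d - 1, by omega⟩ -
                Ψ j (WithLp.toLp 2 (fun i : Fin (d - 1) => e j ξ (Fin.castLE (by omega) i)))|)
    (hfar : ∀ ξ ∈ Dt, c * Real.sqrt (1 + ‖ξ‖ ^ 2) ≤ Metric.infDist ξ (frontier Ω))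
    (β K : ℝ) (hβ : (d : ℝ) < β) (hK : 0 < K)
    (m : ℕ) (hm : 1 ≤ m)
    (a : ℝ → EuclideanSpace ℝ (Fin d) → ℝ)
    (hsmooth : ∀ T : ℝ, 0 < T → T ≤ 1 → ContDiff ℝ (⊤ : ℕ∞) (a T))
    (hclose : ∀ T : ℝ, 0 < T → T ≤ 1 → ∀ ξ,
      |a T ξ - Set.indicator Ω (fun _ => (1 : ℝ)) ξ|
        ≤ K * Real.sqrt (1 + (Metric.infDist ξ (frontier Ω) / T) ^ 2) ^ (-β))
    (hderiv : ∀ T : ℝ, 0 < T → T ≤ 1 → ∀ ξ,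
      ‖iteratedFDeriv ℝ m (a T) ξ‖
        ≤ K * (T + min (Metric.infDist ξ (frontier Ω)) 1) ^ (-(m : ℝ)) *
            Real.sqrt (1 + (Metric.infDist ξ (frontier Ω) / T) ^ 2) ^ (-β)) :
    (∀ δ : ℝ, (d : ℝ) / β < δ → ∃ C' : ℝ, ∀ T : ℝ, 0 < T → T ≤ 1 →
      (∫⁻ ξ, ENNReal.ofReal (|a T ξ - Set.indicator Ω (fun _ => (1 : ℝ)) ξ| ^ δ))
        ≤ ENNReal.ofReal (C' * T)) ∧
    (∃ C' : ℝ, ∀ T : ℝ, 0 < T → T ≤ 1 →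
      (∫⁻ ξ, ENNReal.ofReal ‖iteratedFDeriv ℝ m (a T) ξ‖)
        ≤ ENNReal.ofReal (C' * T ^ (1 - (m : ℝ)))) := by
  obtain ⟨n, rfl⟩ : ∃ n, d = n + 1 := ⟨d - 1, by omega⟩
  have key := fun p hp hp1 => aux_key n (fun ξ => Metric.infDist ξ (frontier Ω))
    (fun ξ => Metric.infDist_nonneg) J D hDo hDb Dt hDto hcover c hc e Ψ
    (fun j => (hΨlip j).choose_spec.continuous) (fun j ξ hξ => (hgraph j ξ hξ).1) hfar p hp hp1
  have hd1 : (1 : ℝ) < ((n + 1 : ℕ) : ℝ) := by exact_mod_cast (by omega : 1 < n + 1)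
  have hβ0 : 0 < β := by linarith
  constructor
  · intro δ hδ
    have hδ0 : 0 < δ := lt_of_le_of_lt (by positivity) hδ
    have hp : ((n + 1 : ℕ) : ℝ) < β * δ := by
      rw [div_lt_iff₀ hβ0] at hδ; linarith
    obtain ⟨C, hC0, hC⟩ := key (β * δ) hp (hd1.trans hp)
    refine ⟨K ^ δ * C, fun T hT hT1 => ?_⟩
    calc _ ≤ ∫⁻ ξ, ENNReal.ofReal (K ^ δ) * ENNReal.ofReal
          (Real.sqrt (1 + (Metric.infDist ξ (frontier Ω) / T) ^ 2) ^ (-(β * δ))) := by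
          refine lintegral_mono fun ξ => ?_
          rw [← ENNReal.ofReal_mul (by positivity)]
          refine ENNReal.ofReal_le_ofReal ?_
          refine (Real.rpow_le_rpow (abs_nonneg _) (hclose T hT hT1 ξ) hδ0.le).trans ?_
          rw [Real.mul_rpow hK.le (by positivity), ← Real.rpow_mul (by positivity), neg_mul]
      _ ≤ _ := by
          rw [lintegral_const_mul' _ _ ENNReal.ofReal_ne_top, mul_assoc,
            ENNReal.ofReal_mul (by positivity)]
          gcongr
          exact hC T hT hT1
  · obtain ⟨C, hC0, hC⟩ := key β hβ (hd1.trans hβ)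
    refine ⟨K * C, fun T hT hT1 => ?_⟩
    calc _ ≤ ∫⁻ ξ, ENNReal.ofReal (K * T ^ (-(m : ℝ))) * ENNReal.ofReal
          (Real.sqrt (1 + (Metric.infDist ξ (frontier Ω) / T) ^ 2) ^ (-β)) := by
          refine lintegral_mono fun ξ => ?_
          rw [← ENNReal.ofReal_mul (by positivity)]
          refine ENNReal.ofReal_le_ofReal ((hderiv T hT hT1 ξ).trans ?_)
          have h0 : 0 ≤ min (Metric.infDist ξ (frontier Ω)) 1 :=
            le_min Metric.infDist_nonneg zero_le_one
          have := Real.rpow_le_rpow_of_nonpos hT (le_add_of_nonneg_right h0)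
            (show -(m : ℝ) ≤ 0 by simp)
          gcongr
      _ ≤ _ := by
          rw [lintegral_const_mul' _ _ ENNReal.ofReal_ne_top]
          have : K * C * T ^ (1 - (m : ℝ)) = K * T ^ (-(m : ℝ)) * (C * T) := by
            rw [sub_eq_add_neg, Real.rpow_add hT, Real.rpow_one]; ring
          rw [this, ENNReal.ofReal_mul (q := C * T) (by positivity)]
          gcongr
          exact hC T hT hT1
end
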